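/- arXiv:1512.01465 — 13 statements merged into one kernel-verified Lean document; each statement's English description precedes it below -/
import Mathlib

section
/- For all strictly positive real numbers SNR₁₁ and SNR₁₂ and every pair (β₁,β₂) ∈ (0,1]², there exists a unique ρ ∈ (0,1) satisfying 1 + β₁·SNR₁₁ + β₂·SNR₁₂ + 2ρ·√(β₁·SNR₁₁·β₂·SNR₁₂) = (1 + β₁·SNR₁₁·(1−ρ²))·(1 + β₂·SNR₁₂·(1−ρ²)). (Existence follows since the difference of the two sides is continuous, negative at ρ = 0, positive at ρ = 1, and strictly monotone on [0,1].) -/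
/-- The difference of the two sides of the equation defining the optimal correlation
coefficient is strictly increasing in `ρ` on `[0, 1]`. -/
theorem strictMonoOn_rate_gap {a b s : ℝ} (ha : 0 < a) (hb : 0 < b) (hs : 0 < s) :
    StrictMonoOn (fun ρ : ℝ => 1 + a + b + 2 * ρ * s
      - (1 + a * (1 - ρ ^ 2)) * (1 + b * (1 - ρ ^ 2))) (Set.Icc 0 1) := by
  rintro x ⟨hx0, hx1⟩ y ⟨hy0, hy1⟩ hxy
  have hsq : 1 - y ^ 2 ≤ 1 - x ^ 2 := by gcongr
  have hy : 0 ≤ 1 - y ^ 2 := by nlinarith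
  have hx : 0 ≤ 1 - x ^ 2 := hy.trans hsq
  have hprod : (1 + a * (1 - y ^ 2)) * (1 + b * (1 - y ^ 2))
      ≤ (1 + a * (1 - x ^ 2)) * (1 + b * (1 - x ^ 2)) := by gcongr
  have hlin : 2 * x * s < 2 * y * s := by gcongr
  dsimp only
  linarith

/-- Existence and uniqueness of the sum-rate optimal correlation coefficient
ρ⋆(β₁,β₂): for strictly positive SNRs and (β₁,β₂) ∈ (0,1]², there is a unique
ρ ∈ (0,1) with
1 + β₁·SNR₁₁ + β₂·SNR₁₂ + 2ρ·√(β₁·SNR₁₁·β₂·SNR₁₂)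
  = (1 + β₁·SNR₁₁·(1−ρ²))·(1 + β₂·SNR₁₂·(1−ρ²)). -/
theorem exists_unique_rho_star (SNR₁₁ SNR₁₂ : ℝ) (hS₁ : 0 < SNR₁₁) (hS₂ : 0 < SNR₁₂)
    (β₁ β₂ : ℝ) (hβ₁ : β₁ ∈ Set.Ioc (0:ℝ) 1) (hβ₂ : β₂ ∈ Set.Ioc (0:ℝ) 1) :
    ∃! ρ : ℝ, ρ ∈ Set.Ioo (0:ℝ) 1 ∧
      1 + β₁ * SNR₁₁ + β₂ * SNR₁₂ + 2 * ρ * Real.sqrt (β₁ * SNR₁₁ * (β₂ * SNR₁₂))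
        = (1 + β₁ * SNR₁₁ * (1 - ρ ^ 2)) * (1 + β₂ * SNR₁₂ * (1 - ρ ^ 2)) := by
  have ha : 0 < β₁ * SNR₁₁ := mul_pos hβ₁.1 hS₁
  have hb : 0 < β₂ * SNR₁₂ := mul_pos hβ₂.1 hS₂
  generalize β₁ * SNR₁₁ = a at *
  generalize β₂ * SNR₁₂ = b at *
  have hab : 0 < a * b := mul_pos ha hb
  have hs : 0 < √(a * b) := Real.sqrt_pos.2 hab
  have hmono := strictMonoOn_rate_gap ha hb hs
  generalize √(a * b) = s at *
  set f : ℝ → ℝ := fun ρ => 1 + a + b + 2 * ρ * s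
    - (1 + a * (1 - ρ ^ 2)) * (1 + b * (1 - ρ ^ 2)) with hf
  have hcont : ContinuousOn f (Set.Icc 0 1) := by fun_prop
  have hzero : (0 : ℝ) ∈ Set.Ioo (f 0) (f 1) := by
    constructor <;> simp only [hf] <;> nlinarith
  obtain ⟨ρ, hρ, hroot⟩ := intermediate_value_Ioo zero_le_one hcont hzero
  refine ⟨ρ, ⟨hρ, sub_eq_zero.1 hroot⟩, ?_⟩
  rintro σ ⟨hσ, heq⟩
  exact hmono.injOn (Set.Ioo_subset_Icc_self hσ) (Set.Ioo_subset_Icc_self hρ)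
    ((sub_eq_zero.2 heq).trans hroot.symm)
end

section
/- For every pair (β₁,β₂) ∈ (0,1]² and every ρ ∈ [0,1], f(β₁,β₂,ρ) ≤ f(β₁,β₂,ρ⋆(β₁,β₂)) = (1/2)·log₂(1 + β₁·SNR₁₁ + β₂·SNR₁₂ + 2·ρ⋆(β₁,β₂)·√(β₁·SNR₁₁·β₂·SNR₁₂)); that is, ρ⋆(β₁,β₂) maximizes ρ ↦ f(β₁,β₂,ρ) over [0,1], and at ρ⋆(β₁,β₂) the two expressions inside the minimum defining f are equal. -/
open Real

/-- The function `f(β₁,β₂,ρ)` appearing in the feedback sum-rate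
optimization problem. -/
noncomputable def f (SNR₁₁ SNR₁₂ β₁ β₂ ρ : ℝ) : ℝ :=
  min
    ((1/2) * logb 2 (1 + β₁ * SNR₁₁ + β₂ * SNR₁₂ +
      2 * ρ * Real.sqrt (β₁ * SNR₁₁ * (β₂ * SNR₁₂))))
    ((1/2) * logb 2 ((1 + β₁ * SNR₁₁ * (1 - ρ ^ 2)) * (1 + β₂ * SNR₁₂ * (1 - ρ ^ 2))))

/-- ρ⋆(β₁,β₂) maximizes ρ ↦ f(β₁,β₂,ρ) over [0,1], and at ρ⋆(β₁,β₂) both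
expressions inside the minimum defining f coincide, so that
f(β₁,β₂,ρ⋆) = ½·log₂(1 + β₁·SNR₁₁ + β₂·SNR₁₂ + 2·ρ⋆·√(β₁·SNR₁₁·β₂·SNR₁₂)). -/
theorem f_le_f_rho_star (SNR₁₁ SNR₁₂ : ℝ) (hS₁ : 0 < SNR₁₁) (hS₂ : 0 < SNR₁₂)
    (β₁ β₂ ρs : ℝ) (hβ₁ : β₁ ∈ Set.Ioc (0:ℝ) 1) (hβ₂ : β₂ ∈ Set.Ioc (0:ℝ) 1)
    (hρs : ρs ∈ Set.Ioo (0:ℝ) 1)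
    (heq : 1 + β₁ * SNR₁₁ + β₂ * SNR₁₂ +
        2 * ρs * Real.sqrt (β₁ * SNR₁₁ * (β₂ * SNR₁₂))
        = (1 + β₁ * SNR₁₁ * (1 - ρs ^ 2)) * (1 + β₂ * SNR₁₂ * (1 - ρs ^ 2))) :
    (∀ ρ ∈ Set.Icc (0:ℝ) 1, f SNR₁₁ SNR₁₂ β₁ β₂ ρ ≤ f SNR₁₁ SNR₁₂ β₁ β₂ ρs) ∧
      f SNR₁₁ SNR₁₂ β₁ β₂ ρs
        = (1/2) * logb 2 (1 + β₁ * SNR₁₁ + β₂ * SNR₁₂ +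
            2 * ρs * Real.sqrt (β₁ * SNR₁₁ * (β₂ * SNR₁₂))) := by
  have ha : 0 < β₁ * SNR₁₁ := mul_pos hβ₁.1 hS₁
  have hb : 0 < β₂ * SNR₁₂ := mul_pos hβ₂.1 hS₂
  have hval : f SNR₁₁ SNR₁₂ β₁ β₂ ρs
      = (1/2) * logb 2 (1 + β₁ * SNR₁₁ + β₂ * SNR₁₂ +
          2 * ρs * Real.sqrt (β₁ * SNR₁₁ * (β₂ * SNR₁₂))) := by
    rw [f, ← heq, min_self]
  refine ⟨fun ρ hρ => ?_, hval⟩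
  rw [hval]
  have hρ0 : 0 ≤ ρ := hρ.1
  rcases le_total ρ ρs with h | h
  · refine (min_le_left _ _).trans ?_
    gcongr
    norm_num
  · refine (min_le_right _ _).trans ?_
    rw [heq]
    have hρs0 : 0 ≤ ρs := hρs.1.le
    have hc : 0 ≤ 1 - ρ ^ 2 := sub_nonneg.2 (pow_le_one₀ hρ0 hρ.2)
    have hcs : 0 ≤ 1 - ρs ^ 2 := hc.trans (by gcongr)
    gcongr
    norm_num
end

section
/- For every pair (β₁,β₂) ∈ (0,1]², one has ρ⋆(β₁,β₂) ≤ ρ⋆(1,1); that is, ρ⋆(1,1) is the maximum of ρ⋆(β₁,β₂) over all (β₁,β₂) ∈ (0,1]². -/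
/-- In terms of the inverse amplitudes `(√x)⁻¹` and `(√y)⁻¹`, the balance equation defining `ρ⋆`
has a left side increasing in all variables and a right side decreasing in `ρ ∈ (0,1)`. -/
lemma balance_inv_sqrt {x y ρ : ℝ} (hx : 0 < x) (hy : 0 < y)
    (h : 1 + x + y + 2 * ρ * √(x * y) = (1 + x * (1 - ρ ^ 2)) * (1 + y * (1 - ρ ^ 2))) :
    ρ ^ 2 * ((√x)⁻¹ ^ 2 + (√y)⁻¹ ^ 2) + 2 * ρ * ((√x)⁻¹ * (√y)⁻¹) = (1 - ρ ^ 2) ^ 2 := by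
  rw [Real.sqrt_mul hx.le] at h
  have ha : 0 < √x := Real.sqrt_pos.2 hx
  have hb : 0 < √y := Real.sqrt_pos.2 hy
  have hxa : x = √x ^ 2 := (Real.sq_sqrt hx.le).symm
  have hyb : y = √y ^ 2 := (Real.sq_sqrt hy.le).symm
  generalize √x = a at *
  generalize √y = b at *
  subst hxa hyb
  field_simp
  linear_combination h

/-- The solution of the balance equation is monotone in the two signal-to-noise ratios. -/
lemma balance_solution_mono {x y X Y ρ R : ℝ} (hx : 0 < x) (hy : 0 < y) (hxX : x ≤ X)
    (hyY : y ≤ Y) (hρ : ρ ∈ Set.Ioo (0 : ℝ) 1) (hR : R ∈ Set.Ioo (0 : ℝ) 1)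
    (h : 1 + x + y + 2 * ρ * √(x * y) = (1 + x * (1 - ρ ^ 2)) * (1 + y * (1 - ρ ^ 2)))
    (H : 1 + X + Y + 2 * R * √(X * Y) = (1 + X * (1 - R ^ 2)) * (1 + Y * (1 - R ^ 2))) :
    ρ ≤ R := by
  obtain ⟨hρ0, hρ1⟩ := hρ
  obtain ⟨hR0, -⟩ := hR
  by_contra! hlt
  have e := balance_inv_sqrt hx hy h
  have E := balance_inv_sqrt (hx.trans_le hxX) (hy.trans_le hyY) H
  have hu : (√X)⁻¹ ≤ (√x)⁻¹ := inv_anti₀ (Real.sqrt_pos.2 hx) (Real.sqrt_le_sqrt hxX)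
  have hv : (√Y)⁻¹ ≤ (√y)⁻¹ := inv_anti₀ (Real.sqrt_pos.2 hy) (Real.sqrt_le_sqrt hyY)
  have hle : R ^ 2 * ((√X)⁻¹ ^ 2 + (√Y)⁻¹ ^ 2) + 2 * R * ((√X)⁻¹ * (√Y)⁻¹) ≤
      ρ ^ 2 * ((√x)⁻¹ ^ 2 + (√y)⁻¹ ^ 2) + 2 * ρ * ((√x)⁻¹ * (√y)⁻¹) := by
    gcongr
  have hsq : R ^ 2 < ρ ^ 2 := by gcongr
  have hρsq : ρ ^ 2 < 1 := by nlinarith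
  have hright : (1 - ρ ^ 2) ^ 2 < (1 - R ^ 2) ^ 2 :=
    pow_lt_pow_left₀ (by linarith) (by linarith) two_ne_zero
  linarith

/-- ρ⋆(1,1) is the maximum of ρ⋆(β₁,β₂) over all (β₁,β₂) ∈ (0,1]², where
ρ⋆(β₁,β₂) is (a choice function selecting) the unique ρ ∈ (0,1) satisfying
1 + β₁·SNR₁₁ + β₂·SNR₁₂ + 2ρ·√(β₁·SNR₁₁·β₂·SNR₁₂)
  = (1 + β₁·SNR₁₁·(1−ρ²))·(1 + β₂·SNR₁₂·(1−ρ²)). -/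
theorem rho_star_le_rho_star_one_one (SNR₁₁ SNR₁₂ : ℝ)
    (hS₁ : 0 < SNR₁₁) (hS₂ : 0 < SNR₁₂) (ρs : ℝ → ℝ → ℝ)
    (hρs : ∀ β₁ β₂ : ℝ, β₁ ∈ Set.Ioc (0:ℝ) 1 → β₂ ∈ Set.Ioc (0:ℝ) 1 →
      ρs β₁ β₂ ∈ Set.Ioo (0:ℝ) 1 ∧
      1 + β₁ * SNR₁₁ + β₂ * SNR₁₂ +
          2 * ρs β₁ β₂ * Real.sqrt (β₁ * SNR₁₁ * (β₂ * SNR₁₂))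
        = (1 + β₁ * SNR₁₁ * (1 - ρs β₁ β₂ ^ 2)) *
            (1 + β₂ * SNR₁₂ * (1 - ρs β₁ β₂ ^ 2))) :
    ∀ β₁ β₂ : ℝ, β₁ ∈ Set.Ioc (0:ℝ) 1 → β₂ ∈ Set.Ioc (0:ℝ) 1 →
      ρs β₁ β₂ ≤ ρs 1 1 := by
  intro β₁ β₂ h₁ h₂
  have one_mem : (1 : ℝ) ∈ Set.Ioc (0 : ℝ) 1 := ⟨one_pos, le_rfl⟩
  obtain ⟨hρ, h⟩ := hρs β₁ β₂ h₁ h₂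
  obtain ⟨hR, H⟩ := hρs 1 1 one_mem one_mem
  exact balance_solution_mono (mul_pos h₁.1 hS₁) (mul_pos h₂.1 hS₂)
    (mul_le_mul_of_nonneg_right h₁.2 hS₁.le) (mul_le_mul_of_nonneg_right h₂.2 hS₂.le) hρ hR h H
end

section
/- Maximum individual information rate with feedback (Proposition 1): for every real b with 0 ≤ b ≤ 1 + SNR₂₁ + SNR₂₂ + 2·√(SNR₂₁·SNR₂₂), the supremum of f₁ᶠᴮ(β₁,β₂,ρ) := min{ (1/2)·log₂(1 + β₁·SNR₁₁·(1−ρ²)), (1/2)·log₂(1 + β₁·SNR₁₁ + β₂·SNR₁₂ + 2ρ·√(β₁·SNR₁₁·β₂·SNR₁₂)) } over all (β₁,β₂,ρ) ∈ [0,1]³ satisfying 1 + SNR₂₁ + SNR₂₂ + 2·√((1−β₁)·SNR₂₁·(1−β₂)·SNR₂₂) + 2ρ·√(β₁·SNR₂₁·β₂·SNR₂₂) ≥ b equals (1/2)·log₂(1 + (1 − ξ(b)²)·SNR₁₁), and this supremum is attained (e.g. at β₁ = 1 − ξ(b)², β₂ = 0, ρ = 0). -/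
open Real

/-- ξ(b): the minimum channel-input correlation required to achieve the
target energy rate b. -/
noncomputable def xi (SNR₂₁ SNR₂₂ b : ℝ) : ℝ :=
  max 0 (b - (1 + SNR₂₁ + SNR₂₂)) / (2 * Real.sqrt (SNR₂₁ * SNR₂₂))

/-- Transmitter 1's objective `f₁ᶠᴮ(β₁,β₂,ρ)` in the individual-rate
optimization problem with feedback. -/
noncomputable def f₁FB (SNR₁₁ SNR₁₂ β₁ β₂ ρ : ℝ) : ℝ :=
  min
    ((1/2) * logb 2 (1 + β₁ * SNR₁₁ * (1 - ρ ^ 2)))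
    ((1/2) * logb 2 (1 + β₁ * SNR₁₁ + β₂ * SNR₁₂ +
      2 * ρ * Real.sqrt (β₁ * SNR₁₁ * (β₂ * SNR₁₂))))

/-- The energy-rate constraint function `gᶠᴮ(β₁,β₂,ρ)` with feedback. -/
noncomputable def gFB (SNR₂₁ SNR₂₂ β₁ β₂ ρ : ℝ) : ℝ :=
  1 + SNR₂₁ + SNR₂₂ + 2 * Real.sqrt ((1 - β₁) * SNR₂₁ * ((1 - β₂) * SNR₂₂)) +
    2 * ρ * Real.sqrt (β₁ * SNR₂₁ * (β₂ * SNR₂₂))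

theorem xi_nonneg (S T b : ℝ) : 0 ≤ xi S T b := by
  unfold xi
  positivity

theorem xi_le_iff {S T b c : ℝ} (hS : 0 < S) (hT : 0 < T) (hc : 0 ≤ c) :
    xi S T b ≤ c ↔ b ≤ 1 + S + T + 2 * √(S * T) * c := by
  have hs : 0 < 2 * √(S * T) := by positivity
  rw [xi, div_le_iff₀ hs, max_le_iff, and_iff_right (by positivity), sub_le_iff_le_add', mul_comm c]

theorem gFB_eq {S T β₁ β₂ : ℝ} (ρ : ℝ) (hS : 0 < S) (hβ₁ : β₁ ∈ Set.Icc (0 : ℝ) 1)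
    (hβ₂ : β₂ ∈ Set.Icc (0 : ℝ) 1) :
    gFB S T β₁ β₂ ρ =
      1 + S + T + 2 * √(S * T) * (√(1 - β₁) * √(1 - β₂) + ρ * (√β₁ * √β₂)) := by
  have h₁ : 0 ≤ 1 - β₁ := sub_nonneg.2 hβ₁.2
  have h₂ : 0 ≤ 1 - β₂ := sub_nonneg.2 hβ₂.2
  rw [gFB, sqrt_mul (mul_nonneg h₁ hS.le), sqrt_mul h₁, sqrt_mul h₂,
    sqrt_mul (mul_nonneg hβ₁.1 hS.le), sqrt_mul hβ₁.1, sqrt_mul hβ₂.1, sqrt_mul hS.le]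
  ring

/-- The Cauchy–Schwarz bound on the correlation achieved by power splits `β₁`, `β₂`. -/
theorem sq_correlation_le {β₁ β₂ : ℝ} (ρ : ℝ) (hβ₁ : β₁ ∈ Set.Icc (0 : ℝ) 1)
    (hβ₂ : β₂ ∈ Set.Icc (0 : ℝ) 1) :
    (√(1 - β₁) * √(1 - β₂) + ρ * (√β₁ * √β₂)) ^ 2 ≤ 1 - β₁ * (1 - ρ ^ 2) := by
  have h₁ := sq_sqrt (sub_nonneg.2 hβ₁.2)
  have h₂ := sq_sqrt (sub_nonneg.2 hβ₂.2)
  have h₃ := sq_sqrt hβ₁.1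
  have h₄ := sq_sqrt hβ₂.1
  calc (√(1 - β₁) * √(1 - β₂) + ρ * (√β₁ * √β₂)) ^ 2
      ≤ (√(1 - β₁) ^ 2 + ρ ^ 2 * √β₁ ^ 2) * (√(1 - β₂) ^ 2 + √β₂ ^ 2) := by
        nlinarith [sq_nonneg (√(1 - β₁) * √β₂ - ρ * √β₁ * √(1 - β₂))]
    _ = 1 - β₁ * (1 - ρ ^ 2) := by
        rw [h₁, h₂, h₃, h₄]
        ring

theorem f₁FB_zero_zero (S T β : ℝ) :
    f₁FB S T β 0 0 = (1/2) * logb 2 (1 + β * S) := by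
  simp [f₁FB]

/-- Proposition 1: the maximum individual information rate of transmitter 1
in the G-MAC-F(b) is ½·log₂(1 + (1 − ξ(b)²)·SNR₁₁), attained at
β₁ = 1 − ξ(b)², β₂ = 0, ρ = 0. -/
theorem max_individual_rate_feedback (SNR₁₁ SNR₁₂ SNR₂₁ SNR₂₂ : ℝ)
    (hS₁₁ : 0 < SNR₁₁) (hS₁₂ : 0 < SNR₁₂) (hS₂₁ : 0 < SNR₂₁) (hS₂₂ : 0 < SNR₂₂)
    (b : ℝ) (hb₀ : 0 ≤ b)
    (hb₁ : b ≤ 1 + SNR₂₁ + SNR₂₂ + 2 * Real.sqrt (SNR₂₁ * SNR₂₂)) :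
    IsGreatest
      {r : ℝ | ∃ β₁ ∈ Set.Icc (0:ℝ) 1, ∃ β₂ ∈ Set.Icc (0:ℝ) 1,
        ∃ ρ ∈ Set.Icc (0:ℝ) 1,
          gFB SNR₂₁ SNR₂₂ β₁ β₂ ρ ≥ b ∧ r = f₁FB SNR₁₁ SNR₁₂ β₁ β₂ ρ}
      ((1/2) * logb 2 (1 + (1 - xi SNR₂₁ SNR₂₂ b ^ 2) * SNR₁₁)) ∧
    gFB SNR₂₁ SNR₂₂ (1 - xi SNR₂₁ SNR₂₂ b ^ 2) 0 0 ≥ b ∧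
    f₁FB SNR₁₁ SNR₁₂ (1 - xi SNR₂₁ SNR₂₂ b ^ 2) 0 0
      = (1/2) * logb 2 (1 + (1 - xi SNR₂₁ SNR₂₂ b ^ 2) * SNR₁₁) := by
  have hξ₀ := xi_nonneg SNR₂₁ SNR₂₂ b
  have hξ₁ : xi SNR₂₁ SNR₂₂ b ≤ 1 := (xi_le_iff hS₂₁ hS₂₂ zero_le_one).2 (by linarith)
  have hβ : 1 - xi SNR₂₁ SNR₂₂ b ^ 2 ∈ Set.Icc (0 : ℝ) 1 := by
    constructor <;> nlinarith
  have h₀ : (0 : ℝ) ∈ Set.Icc (0 : ℝ) 1 := ⟨le_rfl, zero_le_one⟩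
  have hg : gFB SNR₂₁ SNR₂₂ (1 - xi SNR₂₁ SNR₂₂ b ^ 2) 0 0 ≥ b := by
    rw [gFB_eq 0 hS₂₁ hβ h₀, sub_sub_cancel, sqrt_sq hξ₀]
    simpa using (xi_le_iff hS₂₁ hS₂₂ hξ₀).1 le_rfl
  refine ⟨⟨⟨_, hβ, 0, h₀, 0, h₀, hg, (f₁FB_zero_zero _ _ _).symm⟩, ?_⟩, hg, f₁FB_zero_zero _ _ _⟩
  rintro _ ⟨β₁, hβ₁, β₂, hβ₂, ρ, hρ, hgb, rfl⟩
  rw [gFB_eq ρ hS₂₁ hβ₁ hβ₂] at hgb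
  have hρ₀ := hρ.1
  have hξ := (xi_le_iff hS₂₁ hS₂₂ (by positivity)).2 hgb
  have hsq := (pow_le_pow_left₀ hξ₀ hξ 2).trans (sq_correlation_le ρ hβ₁ hβ₂)
  have hρ₂ : 0 ≤ 1 - ρ ^ 2 := by nlinarith [hρ.2]
  have hpos : 0 ≤ β₁ * SNR₁₁ * (1 - ρ ^ 2) := mul_nonneg (mul_nonneg hβ₁.1 hS₁₁.le) hρ₂
  refine (min_le_left _ _).trans (mul_le_mul_of_nonneg_left ?_ (by norm_num))
  refine logb_le_logb_of_le one_lt_two (by linarith) ?_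
  nlinarith
end

section
/- Feedback sum-capacity, low-energy regime (Proposition 3, case 1): for every real b with 0 ≤ b ≤ 1 + SNR₂₁ + SNR₂₂ + 2·ρ⋆(1,1)·√(SNR₂₁·SNR₂₂), the supremum of f(β₁,β₂,ρ) over all (β₁,β₂,ρ) ∈ [0,1]³ satisfying g(β₁,β₂,ρ) ≥ b equals (1/2)·log₂(1 + SNR₁₁ + SNR₁₂ + 2·ρ⋆(1,1)·√(SNR₁₁·SNR₁₂)), attained at (β₁,β₂,ρ) = (1,1,ρ⋆(1,1)). -/
open Real

/-- The feedback energy-rate constraint function `g(β₁,β₂,ρ)`. -/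
noncomputable def g (SNR₂₁ SNR₂₂ β₁ β₂ ρ : ℝ) : ℝ :=
  1 + SNR₂₁ + SNR₂₂ +
    2 * (ρ * Real.sqrt (β₁ * β₂) + Real.sqrt ((1 - β₁) * (1 - β₂))) *
      Real.sqrt (SNR₂₁ * SNR₂₂)

/-- Each of the two rates in `f` is monotone in `β₁` and `β₂`; the first increases and the second
decreases with `ρ`. -/
theorem f_le_of_rates_eq {a c r β₁ β₂ ρ : ℝ} (ha : 0 < a) (hc : 0 < c) (hr : r ∈ Set.Ioo (0:ℝ) 1)
    (heq : 1 + a + c + 2 * r * Real.sqrt (a * c) = (1 + a * (1 - r ^ 2)) * (1 + c * (1 - r ^ 2)))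
    (hβ₁ : β₁ ∈ Set.Icc (0:ℝ) 1) (hβ₂ : β₂ ∈ Set.Icc (0:ℝ) 1) (hρ : ρ ∈ Set.Icc (0:ℝ) 1) :
    f a c β₁ β₂ ρ ≤ (1/2) * logb 2 (1 + a + c + 2 * r * Real.sqrt (a * c)) := by
  obtain ⟨hr0, hr1⟩ := hr
  obtain ⟨hβ₁0, hβ₁1⟩ := hβ₁
  obtain ⟨hβ₂0, hβ₂1⟩ := hβ₂
  obtain ⟨hρ0, hρ1⟩ := hρ
  have h1 : β₁ * a ≤ a := mul_le_of_le_one_left ha.le hβ₁1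
  have h2 : β₂ * c ≤ c := mul_le_of_le_one_left hc.le hβ₂1
  unfold f
  rcases le_total ρ r with h | h
  · refine (min_le_left _ _).trans ?_
    gcongr
    norm_num
  · refine (min_le_right _ _).trans ?_
    rw [heq]
    have hq : 0 ≤ 1 - ρ ^ 2 := by nlinarith
    have hqr : 1 - ρ ^ 2 ≤ 1 - r ^ 2 := by gcongr
    have hr2 : 0 ≤ 1 - r ^ 2 := hq.trans hqr
    gcongr
    norm_num

/-- Proposition 3, case 1: for 0 ≤ b ≤ 1 + SNR₂₁ + SNR₂₂ + 2·ρ⋆(1,1)·√(SNR₂₁·SNR₂₂),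
the feedback information sum-capacity is
½·log₂(1 + SNR₁₁ + SNR₁₂ + 2·ρ⋆(1,1)·√(SNR₁₁·SNR₁₂)), attained at (1,1,ρ⋆(1,1)). -/
theorem sum_capacity_feedback_low_energy (SNR₁₁ SNR₁₂ SNR₂₁ SNR₂₂ : ℝ)
    (hS₁₁ : 0 < SNR₁₁) (hS₁₂ : 0 < SNR₁₂) (hS₂₁ : 0 < SNR₂₁) (hS₂₂ : 0 < SNR₂₂)
    (ρs : ℝ) (hρs : ρs ∈ Set.Ioo (0:ℝ) 1)
    (hρseq : 1 + SNR₁₁ + SNR₁₂ + 2 * ρs * Real.sqrt (SNR₁₁ * SNR₁₂)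
      = (1 + SNR₁₁ * (1 - ρs ^ 2)) * (1 + SNR₁₂ * (1 - ρs ^ 2)))
    (b : ℝ) (hb₀ : 0 ≤ b)
    (hb₁ : b ≤ 1 + SNR₂₁ + SNR₂₂ + 2 * ρs * Real.sqrt (SNR₂₁ * SNR₂₂)) :
    IsGreatest
      {r : ℝ | ∃ β₁ ∈ Set.Icc (0:ℝ) 1, ∃ β₂ ∈ Set.Icc (0:ℝ) 1,
        ∃ ρ ∈ Set.Icc (0:ℝ) 1,
          g SNR₂₁ SNR₂₂ β₁ β₂ ρ ≥ b ∧ r = f SNR₁₁ SNR₁₂ β₁ β₂ ρ}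
      ((1/2) * logb 2 (1 + SNR₁₁ + SNR₁₂ + 2 * ρs * Real.sqrt (SNR₁₁ * SNR₁₂))) ∧
    g SNR₂₁ SNR₂₂ 1 1 ρs ≥ b ∧
    f SNR₁₁ SNR₁₂ 1 1 ρs
      = (1/2) * logb 2 (1 + SNR₁₁ + SNR₁₂ + 2 * ρs * Real.sqrt (SNR₁₁ * SNR₁₂)) := by
  have hg : g SNR₂₁ SNR₂₂ 1 1 ρs ≥ b := by
    simpa [g] using hb₁
  have hf : f SNR₁₁ SNR₁₂ 1 1 ρs
      = (1/2) * logb 2 (1 + SNR₁₁ + SNR₁₂ + 2 * ρs * Real.sqrt (SNR₁₁ * SNR₁₂)) := by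
    simp only [f, one_mul]
    rw [← hρseq, min_self]
  refine ⟨⟨⟨1, by simp, 1, by simp, ρs, ⟨hρs.1.le, hρs.2.le⟩, hg, hf.symm⟩, ?_⟩, hg, hf⟩
  rintro _ ⟨β₁, hβ₁, β₂, hβ₂, ρ, hρ, -, rfl⟩
  exact f_le_of_rates_eq hS₁₁ hS₁₂ hρs hρseq hβ₁ hβ₂ hρ
end

section
/- Structure of the optimal correlation (Lemma in Appendix F): let b satisfy 0 ≤ b ≤ 1 + SNR₂₁ + SNR₂₂ + 2·√(SNR₂₁·SNR₂₂). If (β₁,β₂,ρ) ∈ (0,1]² × [0,1] satisfies g(β₁,β₂,ρ) ≥ b and f(β₁,β₂,ρ) ≥ f(β₁′,β₂′,ρ′) for every (β₁′,β₂′,ρ′) ∈ [0,1]³ with g(β₁′,β₂′,ρ′) ≥ b, then ρ = max{ ρ_min(β₁,β₂), ρ⋆(β₁,β₂) }. -/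
open Real

/-- ρ_min(β₁,β₂): the smallest feasible correlation for the power split
(β₁,β₂) and energy rate b. -/
noncomputable def rhoMin (SNR₂₁ SNR₂₂ b β₁ β₂ : ℝ) : ℝ :=
  min 1
    (max 0 (b - (1 + SNR₂₁ + SNR₂₂ +
        2 * Real.sqrt ((1 - β₁) * SNR₂₁ * ((1 - β₂) * SNR₂₂)))) /
      (2 * Real.sqrt (β₁ * SNR₂₁ * (β₂ * SNR₂₂))))

/-- The energy constraint function, with the signal-to-noise ratios moved inside the roots. -/
lemma g_eq {β₁ β₂ : ℝ} (hβ₁ : β₁ ∈ Set.Ioc (0:ℝ) 1) (hβ₂ : β₂ ∈ Set.Ioc (0:ℝ) 1)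
    (SNR₂₁ SNR₂₂ ρ : ℝ) :
    g SNR₂₁ SNR₂₂ β₁ β₂ ρ = 1 + SNR₂₁ + SNR₂₂ +
      2 * Real.sqrt ((1 - β₁) * SNR₂₁ * ((1 - β₂) * SNR₂₂)) +
      ρ * (2 * Real.sqrt (β₁ * SNR₂₁ * (β₂ * SNR₂₂))) := by
  have h₁ : Real.sqrt (β₁ * SNR₂₁ * (β₂ * SNR₂₂)) =
      Real.sqrt (β₁ * β₂) * Real.sqrt (SNR₂₁ * SNR₂₂) := by
    rw [← Real.sqrt_mul (mul_nonneg hβ₁.1.le hβ₂.1.le)]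
    congr 1
    ring
  have h₂ : Real.sqrt ((1 - β₁) * SNR₂₁ * ((1 - β₂) * SNR₂₂)) =
      Real.sqrt ((1 - β₁) * (1 - β₂)) * Real.sqrt (SNR₂₁ * SNR₂₂) := by
    rw [← Real.sqrt_mul (mul_nonneg (sub_nonneg.2 hβ₁.2) (sub_nonneg.2 hβ₂.2))]
    congr 1
    ring
  rw [g, h₁, h₂]
  ring

/-- A correlation below one is feasible exactly when it is at least `rhoMin`. -/
lemma le_g_iff_rhoMin_le {SNR₂₁ SNR₂₂ b β₁ β₂ ρ : ℝ} (hS₂₁ : 0 < SNR₂₁) (hS₂₂ : 0 < SNR₂₂)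
    (hβ₁ : β₁ ∈ Set.Ioc (0:ℝ) 1) (hβ₂ : β₂ ∈ Set.Ioc (0:ℝ) 1) (hρ₀ : 0 ≤ ρ) (hρ₁ : ρ < 1) :
    b ≤ g SNR₂₁ SNR₂₂ β₁ β₂ ρ ↔ rhoMin SNR₂₁ SNR₂₂ b β₁ β₂ ≤ ρ := by
  have hpos : 0 < 2 * Real.sqrt (β₁ * SNR₂₁ * (β₂ * SNR₂₂)) :=
    mul_pos two_pos (Real.sqrt_pos.2
      (mul_pos (mul_pos hβ₁.1 hS₂₁) (mul_pos hβ₂.1 hS₂₂)))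
  rw [rhoMin, min_le_iff, or_iff_right hρ₁.not_ge, div_le_iff₀ hpos, max_le_iff,
    and_iff_right (mul_nonneg hρ₀ hpos.le), g_eq hβ₁ hβ₂, sub_le_iff_le_add']

lemma rhoMin_le_one (SNR₂₁ SNR₂₂ b β₁ β₂ : ℝ) : rhoMin SNR₂₁ SNR₂₂ b β₁ β₂ ≤ 1 :=
  min_le_left _ _

lemma g_monotone (SNR₂₁ SNR₂₂ β₁ β₂ : ℝ) : Monotone (g SNR₂₁ SNR₂₂ β₁ β₂) := by
  intro ρ ρ' h
  unfold g
  gcongr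

/-- The second argument of the logarithm in `f` decreases in the correlation. -/
lemma conditional_product_strictAntiOn {A B : ℝ} (hA : 0 < A) (hB : 0 < B) :
    StrictAntiOn (fun ρ : ℝ ↦ (1 + A * (1 - ρ ^ 2)) * (1 + B * (1 - ρ ^ 2)))
      (Set.Icc 0 1) := by
  intro x hx y hy hxy
  have hsq : x ^ 2 < y ^ 2 := pow_lt_pow_left₀ hxy hx.1 two_ne_zero
  have hy1 : 0 ≤ 1 - y ^ 2 := sub_nonneg.2 (pow_le_one₀ hy.1 hy.2)
  have hx1 : 0 ≤ 1 - x ^ 2 := by linarith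
  have h1 : 1 + A * (1 - y ^ 2) < 1 + A * (1 - x ^ 2) := by gcongr
  have h2 : 1 + B * (1 - y ^ 2) < 1 + B * (1 - x ^ 2) := by gcongr
  exact mul_lt_mul'' h1 h2 (by positivity) (by positivity)

/-- `f` is half the binary logarithm of the smaller of its two arguments. -/
lemma f_lt_f_iff {SNR₁₁ SNR₁₂ β₁ β₂ ρ ρ' : ℝ} (hA : 0 < β₁ * SNR₁₁) (hB : 0 < β₂ * SNR₁₂)
    (hρ : ρ ∈ Set.Icc (0:ℝ) 1) (hρ' : ρ' ∈ Set.Icc (0:ℝ) 1) :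
    f SNR₁₁ SNR₁₂ β₁ β₂ ρ < f SNR₁₁ SNR₁₂ β₁ β₂ ρ' ↔
      min (1 + β₁ * SNR₁₁ + β₂ * SNR₁₂ + 2 * ρ * Real.sqrt (β₁ * SNR₁₁ * (β₂ * SNR₁₂)))
        ((1 + β₁ * SNR₁₁ * (1 - ρ ^ 2)) * (1 + β₂ * SNR₁₂ * (1 - ρ ^ 2))) <
      min (1 + β₁ * SNR₁₁ + β₂ * SNR₁₂ + 2 * ρ' * Real.sqrt (β₁ * SNR₁₁ * (β₂ * SNR₁₂)))
        ((1 + β₁ * SNR₁₁ * (1 - ρ' ^ 2)) * (1 + β₂ * SNR₁₂ * (1 - ρ' ^ 2))) := by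
  have hmono : StrictMonoOn (fun x : ℝ ↦ 1 / 2 * logb 2 x) (Set.Ioi 0) :=
    fun x hx y hy hxy ↦ mul_lt_mul_of_pos_left
      (Real.strictMonoOn_logb one_lt_two hx hy hxy) one_half_pos
  have hsum : ∀ r ∈ Set.Icc (0:ℝ) 1, 1 + β₁ * SNR₁₁ + β₂ * SNR₁₂ +
      2 * r * Real.sqrt (β₁ * SNR₁₁ * (β₂ * SNR₁₂)) ∈ Set.Ioi (0:ℝ) := by
    intro r hr
    have := hr.1
    exact Set.mem_Ioi.2 (by positivity)
  have hprod : ∀ r ∈ Set.Icc (0:ℝ) 1, (1 + β₁ * SNR₁₁ * (1 - r ^ 2)) *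
      (1 + β₂ * SNR₁₂ * (1 - r ^ 2)) ∈ Set.Ioi (0:ℝ) := by
    intro r hr
    have hr1 : 0 ≤ 1 - r ^ 2 := sub_nonneg.2 (pow_le_one₀ hr.1 hr.2)
    exact Set.mem_Ioi.2 (by positivity)
  have hmin : ∀ r ∈ Set.Icc (0:ℝ) 1, _ :=
    fun r hr ↦ hmono.monotoneOn.map_min (hsum r hr) (hprod r hr)
  unfold f
  rw [← hmin ρ hρ, ← hmin ρ' hρ']
  exact hmono.lt_iff_lt (Set.mem_Ioi.2 (lt_min (hsum ρ hρ) (hprod ρ hρ)))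
    (Set.mem_Ioi.2 (lt_min (hsum ρ' hρ') (hprod ρ' hρ')))

/-- Lemma 1 of Appendix F: any maximizer (β₁,β₂,ρ) of the feedback
sum-rate optimization problem with β₁,β₂ > 0 satisfies
ρ = max{ρ_min(β₁,β₂), ρ⋆(β₁,β₂)}. -/
theorem optimal_correlation_structure (SNR₁₁ SNR₁₂ SNR₂₁ SNR₂₂ : ℝ)
    (hS₁₁ : 0 < SNR₁₁) (hS₁₂ : 0 < SNR₁₂) (hS₂₁ : 0 < SNR₂₁) (hS₂₂ : 0 < SNR₂₂)
    (b : ℝ) (hb₀ : 0 ≤ b)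
    (hb₁ : b ≤ 1 + SNR₂₁ + SNR₂₂ + 2 * Real.sqrt (SNR₂₁ * SNR₂₂))
    (β₁ β₂ ρ : ℝ) (hβ₁ : β₁ ∈ Set.Ioc (0:ℝ) 1) (hβ₂ : β₂ ∈ Set.Ioc (0:ℝ) 1)
    (hρ : ρ ∈ Set.Icc (0:ℝ) 1)
    (ρs : ℝ) (hρs : ρs ∈ Set.Ioo (0:ℝ) 1)
    (hρseq : 1 + β₁ * SNR₁₁ + β₂ * SNR₁₂ +
        2 * ρs * Real.sqrt (β₁ * SNR₁₁ * (β₂ * SNR₁₂))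
      = (1 + β₁ * SNR₁₁ * (1 - ρs ^ 2)) * (1 + β₂ * SNR₁₂ * (1 - ρs ^ 2)))
    (hfeas : g SNR₂₁ SNR₂₂ β₁ β₂ ρ ≥ b)
    (hopt : ∀ β₁' ∈ Set.Icc (0:ℝ) 1, ∀ β₂' ∈ Set.Icc (0:ℝ) 1,
      ∀ ρ' ∈ Set.Icc (0:ℝ) 1, g SNR₂₁ SNR₂₂ β₁' β₂' ρ' ≥ b →
        f SNR₁₁ SNR₁₂ β₁' β₂' ρ' ≤ f SNR₁₁ SNR₁₂ β₁ β₂ ρ) :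
    ρ = max (rhoMin SNR₂₁ SNR₂₂ b β₁ β₂) ρs := by
  have hA : 0 < β₁ * SNR₁₁ := mul_pos hβ₁.1 hS₁₁
  have hB : 0 < β₂ * SNR₁₂ := mul_pos hβ₂.1 hS₁₂
  have hs : 0 < Real.sqrt (β₁ * SNR₁₁ * (β₂ * SNR₁₂)) := Real.sqrt_pos.2 (mul_pos hA hB)
  have hanti := conditional_product_strictAntiOn hA hB
  have hρs' : ρs ∈ Set.Icc (0:ℝ) 1 := Set.Ioo_subset_Icc_self hρs
  refine le_antisymm (not_lt.1 fun hlt ↦ ?_) (max_le ?_ (not_lt.1 fun hlt ↦ ?_))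
  · set m := max (rhoMin SNR₂₁ SNR₂₂ b β₁ β₂) ρs
    have hsm : ρs ≤ m := le_max_right _ _
    have hm : m ∈ Set.Icc (0:ℝ) 1 := ⟨hρs'.1.trans hsm, hlt.le.trans hρ.2⟩
    have hg : b ≤ g SNR₂₁ SNR₂₂ β₁ β₂ m :=
      (le_g_iff_rhoMin_le hS₂₁ hS₂₂ hβ₁ hβ₂ hm.1 (hlt.trans_le hρ.2)).2 (le_max_left _ _)
    refine (hopt β₁ (Set.Ioc_subset_Icc_self hβ₁) β₂ (Set.Ioc_subset_Icc_self hβ₂) m hm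
      hg).not_gt ((f_lt_f_iff hA hB hρ hm).2 ?_)
    have hprod := hanti hm hρ hlt
    refine (min_le_right _ _).trans_lt (lt_min (hprod.trans_le ?_) hprod)
    refine (hanti.antitoneOn hρs' hm hsm).trans (hρseq.symm.le.trans ?_)
    gcongr
  · rcases hρ.2.lt_or_eq with h | h
    · exact (le_g_iff_rhoMin_le hS₂₁ hS₂₂ hβ₁ hβ₂ hρ.1 h).1 hfeas
    · exact h ▸ rhoMin_le_one _ _ _ _ _
  · refine (hopt β₁ (Set.Ioc_subset_Icc_self hβ₁) β₂ (Set.Ioc_subset_Icc_self hβ₂) ρs hρs'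
      (hfeas.trans (g_monotone _ _ _ _ hlt.le))).not_gt ((f_lt_f_iff hA hB hρ hρs').2 ?_)
    rw [← hρseq, min_self]
    refine (min_le_left _ _).trans_lt ?_
    gcongr
end

section
/- Uniqueness of the feedback sum-rate maximizer (Lemma in Appendix F): let b satisfy 0 ≤ b < 1 + SNR₂₁ + SNR₂₂ + 2·√(SNR₂₁·SNR₂₂), and let ρ̄ := max{ ρ_min(1,1), ρ⋆(1,1) }. Then (1,1,ρ̄) satisfies g(1,1,ρ̄) ≥ b, and for every (β₁,β₂,ρ) ∈ [0,1]³ with g(β₁,β₂,ρ) ≥ b and (β₁,β₂,ρ) ≠ (1,1,ρ̄) one has f(β₁,β₂,ρ) < f(1,1,ρ̄); that is, (1,1,ρ̄) is the unique maximizer of f over the feasible set { (β₁,β₂,ρ) ∈ [0,1]³ : g(β₁,β₂,ρ) ≥ b }. -/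
open Real

/-- The argument of the first logarithm of `f` is monotone in the powers and the correlation,
strictly so away from the top corner. -/
lemma coherent_snr_lt {S T x y ρ r : ℝ} (hS : 0 < S) (hT : 0 < T) (hx : x ∈ Set.Icc (0 : ℝ) 1)
    (hy : y ∈ Set.Icc (0 : ℝ) 1) (hρ : 0 ≤ ρ) (hρr : ρ ≤ r) (hne : ¬(x = 1 ∧ y = 1 ∧ ρ = r)) :
    1 + x * S + y * T + 2 * ρ * √(x * S * (y * T)) < 1 + S + T + 2 * r * √(S * T) := by
  have hxS : x * S ≤ S := mul_le_of_le_one_left hS.le hx.2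
  have hyT : y * T ≤ T := mul_le_of_le_one_left hT.le hy.2
  have hsqrt : √(x * S * (y * T)) ≤ √(S * T) :=
    Real.sqrt_le_sqrt (mul_le_mul hxS hyT (mul_nonneg hy.1 hT.le) hS.le)
  have hpos : 0 < √(S * T) := Real.sqrt_pos.2 (mul_pos hS hT)
  have hcross : ρ * √(x * S * (y * T)) ≤ ρ * √(S * T) := mul_le_mul_of_nonneg_left hsqrt hρ
  have hcross' : ρ * √(S * T) ≤ r * √(S * T) := mul_le_mul_of_nonneg_right hρr hpos.le
  rcases hx.2.lt_or_eq with h | h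
  · linarith [mul_lt_of_lt_one_left hS h]
  rcases hy.2.lt_or_eq with h' | h'
  · linarith [mul_lt_of_lt_one_left hT h']
  have hlt : ρ < r := hρr.lt_of_ne fun h'' => hne ⟨h, h', h''⟩
  linarith [mul_lt_mul_of_pos_right hlt hpos]

lemma one_add_mul_mul_lt {S T u v w : ℝ} (hS : 0 < S) (hT : 0 < T) (hv : 0 ≤ v) (hw : 0 ≤ w)
    (huw : u ≤ w) (hvw : v ≤ w) (hne : ¬(u = w ∧ v = w)) :
    (1 + u * S) * (1 + v * T) < (1 + w * S) * (1 + w * T) := by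
  rcases huw.lt_or_eq with h | h
  · exact mul_lt_mul (by linarith [mul_lt_mul_of_pos_right h hS])
      (by linarith [mul_le_mul_of_nonneg_right hvw hT.le]) (by positivity) (by positivity)
  · have h' : v < w := hvw.lt_of_ne fun h' => hne ⟨h, h'⟩
    rw [h]
    exact mul_lt_mul_of_pos_left (by linarith [mul_lt_mul_of_pos_right h' hT]) (by positivity)

/-- By Cauchy-Schwarz, a correlation of at least `r` bounds the uncorrelated power. -/
lemma mul_one_sub_sq_le {x y ρ r : ℝ} (hx : x ∈ Set.Icc (0 : ℝ) 1) (hy : y ∈ Set.Icc (0 : ℝ) 1)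
    (hr : 0 ≤ r) (h : r ≤ ρ * √(x * y) + √((1 - x) * (1 - y))) :
    x * (1 - ρ ^ 2) ≤ 1 - r ^ 2 := by
  rw [Real.sqrt_mul hx.1, Real.sqrt_mul (sub_nonneg.2 hx.2)] at h
  have hx' := Real.sq_sqrt hx.1
  have hy' := Real.sq_sqrt hy.1
  have hx'' := Real.sq_sqrt (sub_nonneg.2 hx.2)
  have hy'' := Real.sq_sqrt (sub_nonneg.2 hy.2)
  have hsq := pow_le_pow_left₀ hr h 2
  generalize √x = a at *
  generalize √y = c at *
  generalize √(1 - x) = a' at *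
  generalize √(1 - y) = c' at *
  have hcs : (ρ * (a * c) + a' * c') ^ 2 ≤ (ρ ^ 2 * a ^ 2 + a' ^ 2) * (c ^ 2 + c' ^ 2) := by
    nlinarith [sq_nonneg (ρ * a * c' - a' * c)]
  rw [hx', hx'', hy', hy''] at hcs
  linarith

lemma not_both_eq_one_sub_sq {x y ρ r : ℝ} (hx : x ∈ Set.Icc (0 : ℝ) 1)
    (hρ : ρ ∈ Set.Icc (0 : ℝ) 1) (hr₀ : 0 ≤ r) (hr₁ : r < 1)
    (h : r ≤ ρ * √(x * y) + √((1 - x) * (1 - y))) (hne : ¬(x = 1 ∧ y = 1 ∧ ρ = r)) :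
    ¬(x * (1 - ρ ^ 2) = 1 - r ^ 2 ∧ y * (1 - ρ ^ 2) = 1 - r ^ 2) := by
  rintro ⟨h₁, h₂⟩
  have hpos : 0 < 1 - r ^ 2 := by nlinarith
  have hρne : 1 - ρ ^ 2 ≠ 0 := fun h0 => by rw [h0, mul_zero] at h₁; linarith
  obtain rfl : x = y := mul_right_cancel₀ hρne (h₁.trans h₂.symm)
  rw [Real.sqrt_mul_self hx.1, Real.sqrt_mul_self (sub_nonneg.2 hx.2)] at h
  have hρ₁ : ρ < 1 := hρ.2.lt_of_ne fun h1 => hρne (by rw [h1]; ring)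
  have hx₀ : 0 < x := hx.1.lt_of_ne fun h0 => by rw [← h0, zero_mul] at h₁; linarith
  have hxρ : 0 < x * (1 - ρ) := mul_pos hx₀ (sub_pos.2 hρ₁)
  have hrρ : r ≤ ρ := by
    by_contra! hlt
    nlinarith [mul_pos hxρ (sub_pos.2 hlt)]
  have hx₁ : x = 1 := by
    by_contra hx1
    have : x < 1 := hx.2.lt_of_ne hx1
    nlinarith [hρ.1]
  refine hne ⟨hx₁, hx₁, ?_⟩
  rw [hx₁] at h₁
  nlinarith [hρ.1]

/-- At full power, `f` strictly dominates when a common lower bound of its two terms strictly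
exceeds one of the terms of the competitor. -/
lemma f_lt_f_one_one {S T x y ρ r V : ℝ} (hS : 0 < S) (hT : 0 < T) (hx : 0 ≤ x) (hy : 0 ≤ y)
    (hρ : ρ ∈ Set.Icc (0 : ℝ) 1)
    (h : 1 + x * S + y * T + 2 * ρ * √(x * S * (y * T)) < V ∨
      (1 + x * S * (1 - ρ ^ 2)) * (1 + y * T * (1 - ρ ^ 2)) < V)
    (hV₁ : V ≤ 1 + S + T + 2 * r * √(S * T))
    (hV₂ : V ≤ (1 + S * (1 - r ^ 2)) * (1 + T * (1 - r ^ 2))) :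
    f S T x y ρ < f S T 1 1 r := by
  have hρ₀ := hρ.1
  have hρ₁ : 0 ≤ 1 - ρ ^ 2 := by nlinarith [hρ.2]
  have hlog {X Y : ℝ} (hX : 0 < X) (hXY : X < Y) : (1 / 2) * logb 2 X < (1 / 2) * logb 2 Y :=
    mul_lt_mul_of_pos_left (Real.logb_lt_logb one_lt_two hX hXY) (by norm_num)
  simp only [f, one_mul]
  rcases h with h | h
  · exact (min_le_left _ _).trans_lt
      (lt_min (hlog (by positivity) (h.trans_le hV₁)) (hlog (by positivity) (h.trans_le hV₂)))
  · exact (min_le_right _ _).trans_lt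
      (lt_min (hlog (by positivity) (h.trans_le hV₁)) (hlog (by positivity) (h.trans_le hV₂)))

lemma rhoMin_one_one (S T b : ℝ) :
    rhoMin S T b 1 1 = min 1 (max 0 (b - (1 + S + T)) / (2 * √(S * T))) := by
  simp [rhoMin]

lemma rhoMin_one_one_nonneg (S T b : ℝ) : 0 ≤ rhoMin S T b 1 1 := by
  rw [rhoMin_one_one]
  positivity

lemma rhoMin_one_one_lt_one {S T b : ℝ} (hS : 0 < S) (hT : 0 < T)
    (hb : b < 1 + S + T + 2 * √(S * T)) : rhoMin S T b 1 1 < 1 := by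
  have hpos : 0 < √(S * T) := Real.sqrt_pos.2 (mul_pos hS hT)
  rw [rhoMin_one_one]
  refine min_lt_of_right_lt ((div_lt_one (by positivity)).2 (max_lt (by positivity) ?_))
  linarith

/-- The energy constraint holds exactly when the total correlation is at least
`rhoMin S T b 1 1`. -/
lemma le_add_mul_iff_rhoMin_le {S T b t : ℝ} (hS : 0 < S) (hT : 0 < T)
    (hb : b < 1 + S + T + 2 * √(S * T)) (ht : 0 ≤ t) :
    b ≤ 1 + S + T + 2 * t * √(S * T) ↔ rhoMin S T b 1 1 ≤ t := by
  have hpos : 0 < √(S * T) := Real.sqrt_pos.2 (mul_pos hS hT)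
  have hlt := rhoMin_one_one_lt_one hS hT hb
  rw [rhoMin_one_one] at hlt ⊢
  rw [min_eq_right ((min_lt_iff.1 hlt).resolve_left (lt_irrefl _)).le,
    div_le_iff₀ (by positivity), max_le_iff]
  constructor
  · intro h
    exact ⟨by positivity, by linarith⟩
  · rintro ⟨-, h⟩
    linarith

/-- Lemma 2 of Appendix F: (1,1,ρ̄) with ρ̄ = max{ρ_min(1,1), ρ⋆(1,1)} is the
unique maximizer of the feedback sum-rate optimization problem. -/
theorem unique_sum_rate_maximizer_feedback (SNR₁₁ SNR₁₂ SNR₂₁ SNR₂₂ : ℝ)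
    (hS₁₁ : 0 < SNR₁₁) (hS₁₂ : 0 < SNR₁₂) (hS₂₁ : 0 < SNR₂₁) (hS₂₂ : 0 < SNR₂₂)
    (b : ℝ) (hb₀ : 0 ≤ b)
    (hb₁ : b < 1 + SNR₂₁ + SNR₂₂ + 2 * Real.sqrt (SNR₂₁ * SNR₂₂))
    (ρs : ℝ) (hρs : ρs ∈ Set.Ioo (0:ℝ) 1)
    (hρseq : 1 + SNR₁₁ + SNR₁₂ + 2 * ρs * Real.sqrt (SNR₁₁ * SNR₁₂)
      = (1 + SNR₁₁ * (1 - ρs ^ 2)) * (1 + SNR₁₂ * (1 - ρs ^ 2))) :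
    g SNR₂₁ SNR₂₂ 1 1 (max (rhoMin SNR₂₁ SNR₂₂ b 1 1) ρs) ≥ b ∧
    ∀ β₁ ∈ Set.Icc (0:ℝ) 1, ∀ β₂ ∈ Set.Icc (0:ℝ) 1, ∀ ρ ∈ Set.Icc (0:ℝ) 1,
      g SNR₂₁ SNR₂₂ β₁ β₂ ρ ≥ b →
      (β₁, β₂, ρ) ≠ (1, 1, max (rhoMin SNR₂₁ SNR₂₂ b 1 1) ρs) →
      f SNR₁₁ SNR₁₂ β₁ β₂ ρ
        < f SNR₁₁ SNR₁₂ 1 1 (max (rhoMin SNR₂₁ SNR₂₂ b 1 1) ρs) := by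
  have hρm₀ := rhoMin_one_one_nonneg SNR₂₁ SNR₂₂ b
  have hρm₁ := rhoMin_one_one_lt_one hS₂₁ hS₂₂ hb₁
  have hcon {t : ℝ} (ht : 0 ≤ t) := le_add_mul_iff_rhoMin_le hS₂₁ hS₂₂ hb₁ ht
  generalize rhoMin SNR₂₁ SNR₂₂ b 1 1 = ρm at *
  obtain ⟨hρs₀, hρs₁⟩ := hρs
  refine ⟨?_, fun β₁ hβ₁ β₂ hβ₂ ρ hρ hg hne => ?_⟩
  · have := (hcon (le_max_of_le_left hρm₀)).2 (le_max_left ρm ρs)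
    simpa [g] using this
  have hρ₀ := hρ.1
  have hfeas : ρm ≤ ρ * √(β₁ * β₂) + √((1 - β₁) * (1 - β₂)) := (hcon (by positivity)).1 hg
  have hρsq : 0 ≤ 1 - ρ ^ 2 := by nlinarith [hρ.2]
  have hassoc (β S : ℝ) : β * S * (1 - ρ ^ 2) = β * (1 - ρ ^ 2) * S := by ring
  rcases le_or_gt ρm ρs with hle | hlt
  · rw [max_eq_right hle] at hne ⊢
    refine f_lt_f_one_one hS₁₁ hS₁₂ hβ₁.1 hβ₂.1 hρ ?_ le_rfl hρseq.le
    rcases le_or_gt ρ ρs with h | h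
    · exact Or.inl (coherent_snr_lt hS₁₁ hS₁₂ hβ₁ hβ₂ hρ₀ h (by simpa using hne))
    · right
      have hlt' : 1 - ρ ^ 2 < 1 - ρs ^ 2 := by nlinarith
      have hβρ {β : ℝ} (hβ : β ∈ Set.Icc (0 : ℝ) 1) : β * (1 - ρ ^ 2) < 1 - ρs ^ 2 :=
        (mul_le_of_le_one_left hρsq hβ.2).trans_lt hlt'
      rw [hρseq, hassoc, hassoc, mul_comm SNR₁₁, mul_comm SNR₁₂]
      exact one_add_mul_mul_lt hS₁₁ hS₁₂ (mul_nonneg hβ₂.1 hρsq) (by linarith)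
        (hβρ hβ₁).le (hβρ hβ₂).le fun h => (hβρ hβ₁).ne h.1
  · rw [max_eq_left hlt.le] at hne ⊢
    have hsq : 0 ≤ 1 - ρm ^ 2 := by nlinarith
    refine f_lt_f_one_one hS₁₁ hS₁₂ hβ₁.1 hβ₂.1 hρ (Or.inr ?_) ?_ le_rfl
    · rw [hassoc, hassoc, mul_comm SNR₁₁, mul_comm SNR₁₂]
      refine one_add_mul_mul_lt hS₁₁ hS₁₂ (mul_nonneg hβ₂.1 hρsq) hsq
        (mul_one_sub_sq_le hβ₁ hβ₂ hρm₀ hfeas) (mul_one_sub_sq_le hβ₂ hβ₁ hρm₀ ?_)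
        (not_both_eq_one_sub_sq hβ₁ hρ hρm₀ hρm₁ hfeas (by simpa using hne))
      rwa [mul_comm β₂, mul_comm (1 - β₂)]
    · have hsq' : 0 ≤ 1 - ρs ^ 2 := by nlinarith
      calc (1 + SNR₁₁ * (1 - ρm ^ 2)) * (1 + SNR₁₂ * (1 - ρm ^ 2))
          ≤ (1 + SNR₁₁ * (1 - ρs ^ 2)) * (1 + SNR₁₂ * (1 - ρs ^ 2)) := by gcongr
        _ = 1 + SNR₁₁ + SNR₁₂ + 2 * ρs * √(SNR₁₁ * SNR₁₂) := hρseq.symm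
        _ ≤ 1 + SNR₁₁ + SNR₁₂ + 2 * ρm * √(SNR₁₁ * SNR₁₂) := by gcongr
end

section
/- Sum-capacity without feedback, both-users regime (Proposition 4, case 1): for every real b with 0 ≤ b ≤ 1 + SNR₂₁ + SNR₂₂ + 2·√(SNR₂₁·SNR₂₂)·min{ √(SNR₁₂/SNR₁₁), √(SNR₁₁/SNR₁₂) }, the supremum of f₀(β₁,β₂) over all (β₁,β₂) ∈ [0,1]² satisfying g₀(β₁,β₂) ≥ b equals (1/2)·log₂(1 + SNR₁₁ + SNR₁₂ − 2·ξ(b)·√(SNR₁₁·SNR₁₂)), attained at β₁ = 1 − ξ(b)·√(SNR₁₂/SNR₁₁) and β₂ = 1 − ξ(b)·√(SNR₁₁/SNR₁₂). -/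
open Real

/-- The no-feedback sum-rate objective `f₀(β₁,β₂)`. -/
noncomputable def f₀ (SNR₁₁ SNR₁₂ β₁ β₂ : ℝ) : ℝ :=
  min
    ((1/2) * logb 2 (1 + β₁ * SNR₁₁ + β₂ * SNR₁₂))
    ((1/2) * logb 2 (1 + β₁ * SNR₁₁) + (1/2) * logb 2 (1 + β₂ * SNR₁₂))

/-- The no-feedback energy-rate constraint function `g₀(β₁,β₂)`. -/
noncomputable def g₀ (SNR₂₁ SNR₂₂ β₁ β₂ : ℝ) : ℝ :=
  1 + SNR₂₁ + SNR₂₂ + 2 * Real.sqrt ((1 - β₁) * SNR₂₁ * ((1 - β₂) * SNR₂₂))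

/-- On nonnegative power splits the sum-rate constraint is the active one in `f₀`. -/
lemma f₀_eq_sum_rate {S₁ S₂ β₁ β₂ : ℝ} (h₁ : 0 ≤ β₁ * S₁) (h₂ : 0 ≤ β₂ * S₂) :
    f₀ S₁ S₂ β₁ β₂ = (1/2) * logb 2 (1 + β₁ * S₁ + β₂ * S₂) := by
  unfold f₀
  refine min_eq_left ?_
  rw [← mul_add, ← logb_mul (by positivity) (by positivity)]
  refine mul_le_mul_of_nonneg_left ?_ (by norm_num)
  exact logb_le_logb_of_le one_lt_two (by positivity) (by nlinarith [mul_nonneg h₁ h₂])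

/-- The energy constraint is equivalent to a lower bound on the geometric mean of the
powers spent on the common signal. -/
lemma le_g₀_iff {S₁ S₂ b β₁ β₂ : ℝ} (hS₁ : 0 < S₁) (hS₂ : 0 < S₂)
    (hβ : 0 ≤ (1 - β₁) * (1 - β₂)) :
    b ≤ g₀ S₁ S₂ β₁ β₂ ↔ xi S₁ S₂ b ≤ √((1 - β₁) * (1 - β₂)) := by
  have hs : 0 < √(S₁ * S₂) := Real.sqrt_pos.2 (mul_pos hS₁ hS₂)
  have hg : (1 - β₁) * S₁ * ((1 - β₂) * S₂) = (1 - β₁) * (1 - β₂) * (S₁ * S₂) := by ring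
  have hr : 0 ≤ √((1 - β₁) * (1 - β₂)) * (2 * √(S₁ * S₂)) := by positivity
  unfold g₀ xi
  rw [hg, Real.sqrt_mul hβ, div_le_iff₀ (by positivity), max_le_iff]
  constructor
  · intro h
    exact ⟨hr, by linarith⟩
  · rintro ⟨-, h⟩
    linarith

lemma xi_nonneg_s9 (S₁ S₂ b : ℝ) : 0 ≤ xi S₁ S₂ b := by
  unfold xi
  positivity

lemma xi_le_of_le {S₁ S₂ b m : ℝ} (hS₁ : 0 < S₁) (hS₂ : 0 < S₂) (hm : 0 ≤ m)
    (hb : b ≤ 1 + S₁ + S₂ + 2 * √(S₁ * S₂) * m) : xi S₁ S₂ b ≤ m := by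
  have hs : 0 < √(S₁ * S₂) := Real.sqrt_pos.2 (mul_pos hS₁ hS₂)
  unfold xi
  rw [div_le_iff₀ (by positivity), max_le_iff]
  exact ⟨by positivity, by linarith⟩

/-- Weighted AM-GM: `2 √(uv) √(ab) ≤ u a + v b`. -/
lemma two_mul_sqrt_mul_sqrt_le {u v a b : ℝ} (hu : 0 ≤ u) (hv : 0 ≤ v) (ha : 0 ≤ a)
    (hb : 0 ≤ b) : 2 * √(u * v) * √(a * b) ≤ u * a + v * b := by
  have h : √(u * v) * √(a * b) = √(u * a) * √(v * b) := by
    rw [← Real.sqrt_mul (by positivity), ← Real.sqrt_mul (by positivity)]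
    ring_nf
  nlinarith [sq_nonneg (√(u * a) - √(v * b)), Real.sq_sqrt (mul_nonneg hu ha),
    Real.sq_sqrt (mul_nonneg hv hb)]

lemma sqrt_div_mul_self {a b : ℝ} (ha : 0 < a) : √(b / a) * a = √(a * b) := by
  rw [Real.sqrt_div' _ ha.le, Real.sqrt_mul ha.le, div_mul_eq_mul_div, mul_div_assoc,
    Real.div_sqrt, mul_comm]

lemma sqrt_div_mul_sqrt_div {a b : ℝ} (ha : 0 < a) (hb : 0 < b) : √(b / a) * √(a / b) = 1 := by
  rw [← Real.sqrt_mul (by positivity), div_mul_div_cancel₀ ha.ne', div_self hb.ne', Real.sqrt_one]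

/-- Proposition 4, case 1: for
0 ≤ b ≤ 1 + SNR₂₁ + SNR₂₂ + 2·√(SNR₂₁·SNR₂₂)·min{√(SNR₁₂/SNR₁₁), √(SNR₁₁/SNR₁₂)},
the no-feedback information sum-capacity is
½·log₂(1 + SNR₁₁ + SNR₁₂ − 2·ξ(b)·√(SNR₁₁·SNR₁₂)), attained at
β₁ = 1 − ξ(b)·√(SNR₁₂/SNR₁₁), β₂ = 1 − ξ(b)·√(SNR₁₁/SNR₁₂). -/
theorem sum_capacity_no_feedback_both_users (SNR₁₁ SNR₁₂ SNR₂₁ SNR₂₂ : ℝ)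
    (hS₁₁ : 0 < SNR₁₁) (hS₁₂ : 0 < SNR₁₂) (hS₂₁ : 0 < SNR₂₁) (hS₂₂ : 0 < SNR₂₂)
    (b : ℝ) (hb₀ : 0 ≤ b)
    (hb₁ : b ≤ 1 + SNR₂₁ + SNR₂₂ + 2 * Real.sqrt (SNR₂₁ * SNR₂₂) *
      min (Real.sqrt (SNR₁₂ / SNR₁₁)) (Real.sqrt (SNR₁₁ / SNR₁₂))) :
    IsGreatest
      {r : ℝ | ∃ β₁ ∈ Set.Icc (0:ℝ) 1, ∃ β₂ ∈ Set.Icc (0:ℝ) 1,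
          g₀ SNR₂₁ SNR₂₂ β₁ β₂ ≥ b ∧ r = f₀ SNR₁₁ SNR₁₂ β₁ β₂}
      ((1/2) * logb 2 (1 + SNR₁₁ + SNR₁₂ -
        2 * xi SNR₂₁ SNR₂₂ b * Real.sqrt (SNR₁₁ * SNR₁₂))) ∧
    g₀ SNR₂₁ SNR₂₂ (1 - xi SNR₂₁ SNR₂₂ b * Real.sqrt (SNR₁₂ / SNR₁₁))
        (1 - xi SNR₂₁ SNR₂₂ b * Real.sqrt (SNR₁₁ / SNR₁₂)) ≥ b ∧
    f₀ SNR₁₁ SNR₁₂ (1 - xi SNR₂₁ SNR₂₂ b * Real.sqrt (SNR₁₂ / SNR₁₁))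
        (1 - xi SNR₂₁ SNR₂₂ b * Real.sqrt (SNR₁₁ / SNR₁₂))
      = (1/2) * logb 2 (1 + SNR₁₁ + SNR₁₂ -
          2 * xi SNR₂₁ SNR₂₂ b * Real.sqrt (SNR₁₁ * SNR₁₂)) := by
  have hξ := xi_nonneg_s9 SNR₂₁ SNR₂₂ b
  have hξm := xi_le_of_le hS₂₁ hS₂₂ (le_min (Real.sqrt_nonneg _) (Real.sqrt_nonneg _)) hb₁
  set ξ := xi SNR₂₁ SNR₂₂ b
  have hpq := sqrt_div_mul_sqrt_div hS₁₁ hS₁₂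
  have hp := sqrt_div_mul_self (b := SNR₁₂) hS₁₁
  have hq := sqrt_div_mul_self (b := SNR₁₁) hS₁₂
  rw [mul_comm SNR₁₂ SNR₁₁] at hq
  have hp0 : 0 ≤ √(SNR₁₂ / SNR₁₁) := Real.sqrt_nonneg _
  have hq0 : 0 ≤ √(SNR₁₁ / SNR₁₂) := Real.sqrt_nonneg _
  set p := √(SNR₁₂ / SNR₁₁)
  set q := √(SNR₁₁ / SNR₁₂)
  have hξp : ξ * p ≤ 1 := by
    nlinarith [mul_le_mul_of_nonneg_right (hξm.trans (min_le_right p q)) hp0]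
  have hξq : ξ * q ≤ 1 := by
    nlinarith [mul_le_mul_of_nonneg_right (hξm.trans (min_le_left p q)) hq0]
  have hβ₁ : 1 - ξ * p ∈ Set.Icc (0:ℝ) 1 := ⟨by linarith, by linarith [mul_nonneg hξ hp0]⟩
  have hβ₂ : 1 - ξ * q ∈ Set.Icc (0:ℝ) 1 := ⟨by linarith, by linarith [mul_nonneg hξ hq0]⟩
  have hprod : (1 - (1 - ξ * p)) * (1 - (1 - ξ * q)) = ξ ^ 2 := by
    linear_combination ξ ^ 2 * hpq
  have hg : g₀ SNR₂₁ SNR₂₂ (1 - ξ * p) (1 - ξ * q) ≥ b := by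
    refine (le_g₀_iff hS₂₁ hS₂₂ ?_).2 ?_
    · rw [hprod]
      positivity
    · rw [hprod, Real.sqrt_sq hξ]
  have hf : f₀ SNR₁₁ SNR₁₂ (1 - ξ * p) (1 - ξ * q) =
      (1/2) * logb 2 (1 + SNR₁₁ + SNR₁₂ - 2 * ξ * √(SNR₁₁ * SNR₁₂)) := by
    rw [f₀_eq_sum_rate (mul_nonneg hβ₁.1 hS₁₁.le) (mul_nonneg hβ₂.1 hS₁₂.le)]
    congr 2
    linear_combination -ξ * hp - ξ * hq
  refine ⟨⟨⟨_, hβ₁, _, hβ₂, hg, hf.symm⟩, ?_⟩, hg, hf⟩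
  rintro r ⟨β₁, ⟨h₁, hle₁⟩, β₂, ⟨h₂, hle₂⟩, hgb, rfl⟩
  have hu : 0 ≤ 1 - β₁ := by linarith
  have hv : 0 ≤ 1 - β₂ := by linarith
  have hc := (le_g₀_iff hS₂₁ hS₂₂ (mul_nonneg hu hv)).1 hgb
  have hamgm := two_mul_sqrt_mul_sqrt_le hu hv hS₁₁.le hS₁₂.le
  have hm := mul_le_mul_of_nonneg_right hc (Real.sqrt_nonneg (SNR₁₁ * SNR₁₂))
  rw [f₀_eq_sum_rate (by positivity) (by positivity)]
  refine mul_le_mul_of_nonneg_left ?_ (by norm_num)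
  exact logb_le_logb_of_le one_lt_two (by positivity) (by linarith)
end

section
/- Sum-capacity without feedback, single-user regime (Proposition 4, case 2): for every real b with 1 + SNR₂₁ + SNR₂₂ + 2·√(SNR₂₁·SNR₂₂)·min{ √(SNR₁₂/SNR₁₁), √(SNR₁₁/SNR₁₂) } < b ≤ 1 + SNR₂₁ + SNR₂₂ + 2·√(SNR₂₁·SNR₂₂), the supremum of f₀(β₁,β₂) over all (β₁,β₂) ∈ [0,1]² satisfying g₀(β₁,β₂) ≥ b equals (1/2)·log₂(1 + (1 − ξ(b)²)·max{SNR₁₁, SNR₁₂}), attained by setting βᵢ = 1 − ξ(b)² for the index i maximizing SNR₁ᵢ and βⱼ = 0 for the other index j. -/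
open Real

lemma f₀_comm (S T β γ : ℝ) : f₀ S T β γ = f₀ T S γ β := by
  unfold f₀
  rw [add_right_comm, add_comm (1 / 2 * logb 2 (1 + β * S))]

lemma f₀_zero_right (S T β : ℝ) : f₀ S T β 0 = 1 / 2 * logb 2 (1 + β * S) := by
  simp [f₀]

/-- The energy constraint, in terms of the correlation `ξ(b)`. -/
lemma le_g₀_iff_s10 {S T b β γ : ℝ} (hS : 0 < S) (hT : 0 < T) (hb : 1 + S + T ≤ b)
    (hβ : β ≤ 1) (hγ : γ ≤ 1) :
    b ≤ g₀ S T β γ ↔ xi S T b ^ 2 ≤ (1 - β) * (1 - γ) := by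
  have hs : 0 < √(S * T) := Real.sqrt_pos.2 (mul_pos hS hT)
  have hp : 0 ≤ (1 - β) * (1 - γ) := mul_nonneg (by linarith) (by linarith)
  have hx : 0 ≤ xi S T b := by unfold xi; positivity
  rw [← Real.le_sqrt hx hp, xi, max_eq_right (by linarith), div_le_iff₀ (by positivity), g₀,
    show (1 - β) * S * ((1 - γ) * T) = (1 - β) * (1 - γ) * (S * T) by ring, Real.sqrt_mul hp]
  constructor <;> intro h <;> linarith

/-- Under the product constraint, and when the correlation `x` is large enough, the received
information power is largest when the weaker transmitter sends no information. -/
lemma weighted_sum_le {S T x β γ : ℝ} (hS : 0 ≤ S) (hST : T ≤ x ^ 2 * S)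
    (hβ : β ≤ 1) (hγ : 0 ≤ γ) (h : x ^ 2 ≤ (1 - β) * (1 - γ)) :
    β * S + γ * T ≤ (1 - x ^ 2) * S := by
  have hx : x ^ 2 ≤ 1 - β := by nlinarith
  have hp : γ * x ^ 2 ≤ 1 - β - x ^ 2 := by nlinarith
  nlinarith [mul_le_mul_of_nonneg_left hST hγ, mul_le_mul_of_nonneg_right hp hS]

lemma f₀_le {S T x β γ : ℝ} (hS : 0 ≤ S) (hT : 0 ≤ T) (hST : T ≤ x ^ 2 * S)
    (hβ : β ∈ Set.Icc 0 1) (hγ : γ ∈ Set.Icc 0 1) (h : x ^ 2 ≤ (1 - β) * (1 - γ)) :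
    f₀ S T β γ ≤ 1 / 2 * logb 2 (1 + (1 - x ^ 2) * S) := by
  refine (min_le_left _ _).trans ?_
  obtain ⟨hβ₀, hβ₁⟩ := hβ
  have hγ₀ := hγ.1
  have := weighted_sum_le hS hST hβ₁ hγ₀ h
  gcongr 1 / 2 * ?_
  exact Real.logb_le_logb_of_le one_lt_two (by positivity) (by linarith)

lemma le_sq_mul_of_min_sqrt_lt {S T x : ℝ} (hT : 0 < T) (hTS : T ≤ S)
    (h : min √(T / S) √(S / T) < x) : T ≤ x ^ 2 * S := by
  have hS : 0 < S := hT.trans_le hTS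
  have hle : √(T / S) ≤ √(S / T) :=
    Real.sqrt_le_sqrt (((div_le_one hS).2 hTS).trans ((one_le_div hT).2 hTS))
  rw [min_eq_left hle] at h
  rw [← div_le_iff₀ hS]
  exact (Real.sqrt_le_left ((Real.sqrt_nonneg _).trans h.le)).1 h.le

/-- Proposition 4, case 2: for
1 + SNR₂₁ + SNR₂₂ + 2·√(SNR₂₁·SNR₂₂)·min{√(SNR₁₂/SNR₁₁), √(SNR₁₁/SNR₁₂)} < b
  ≤ 1 + SNR₂₁ + SNR₂₂ + 2·√(SNR₂₁·SNR₂₂),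
the no-feedback information sum-capacity is
½·log₂(1 + (1 − ξ(b)²)·max{SNR₁₁, SNR₁₂}), attained by giving the whole
information power split 1 − ξ(b)² to the transmitter with the highest SNR. -/
theorem sum_capacity_no_feedback_single_user (SNR₁₁ SNR₁₂ SNR₂₁ SNR₂₂ : ℝ)
    (hS₁₁ : 0 < SNR₁₁) (hS₁₂ : 0 < SNR₁₂) (hS₂₁ : 0 < SNR₂₁) (hS₂₂ : 0 < SNR₂₂)
    (b : ℝ)
    (hb₀ : 1 + SNR₂₁ + SNR₂₂ + 2 * Real.sqrt (SNR₂₁ * SNR₂₂) *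
      min (Real.sqrt (SNR₁₂ / SNR₁₁)) (Real.sqrt (SNR₁₁ / SNR₁₂)) < b)
    (hb₁ : b ≤ 1 + SNR₂₁ + SNR₂₂ + 2 * Real.sqrt (SNR₂₁ * SNR₂₂)) :
    IsGreatest
      {r : ℝ | ∃ β₁ ∈ Set.Icc (0:ℝ) 1, ∃ β₂ ∈ Set.Icc (0:ℝ) 1,
          g₀ SNR₂₁ SNR₂₂ β₁ β₂ ≥ b ∧ r = f₀ SNR₁₁ SNR₁₂ β₁ β₂}
      ((1/2) * logb 2 (1 + (1 - xi SNR₂₁ SNR₂₂ b ^ 2) * max SNR₁₁ SNR₁₂)) ∧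
    (SNR₁₂ ≤ SNR₁₁ →
      g₀ SNR₂₁ SNR₂₂ (1 - xi SNR₂₁ SNR₂₂ b ^ 2) 0 ≥ b ∧
      f₀ SNR₁₁ SNR₁₂ (1 - xi SNR₂₁ SNR₂₂ b ^ 2) 0
        = (1/2) * logb 2 (1 + (1 - xi SNR₂₁ SNR₂₂ b ^ 2) * max SNR₁₁ SNR₁₂)) ∧
    (SNR₁₁ ≤ SNR₁₂ →
      g₀ SNR₂₁ SNR₂₂ 0 (1 - xi SNR₂₁ SNR₂₂ b ^ 2) ≥ b ∧
      f₀ SNR₁₁ SNR₁₂ 0 (1 - xi SNR₂₁ SNR₂₂ b ^ 2)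
        = (1/2) * logb 2 (1 + (1 - xi SNR₂₁ SNR₂₂ b ^ 2) * max SNR₁₁ SNR₁₂)) := by
  have hs : 0 < √(SNR₂₁ * SNR₂₂) := Real.sqrt_pos.2 (mul_pos hS₂₁ hS₂₂)
  have hb : 1 + SNR₂₁ + SNR₂₂ ≤ b := le_trans (le_add_of_nonneg_right (by positivity)) hb₀.le
  have hxi : xi SNR₂₁ SNR₂₂ b = (b - (1 + SNR₂₁ + SNR₂₂)) / (2 * √(SNR₂₁ * SNR₂₂)) := by
    rw [xi, max_eq_right (by linarith)]
  have hx₀ : min √(SNR₁₂ / SNR₁₁) √(SNR₁₁ / SNR₁₂) < xi SNR₂₁ SNR₂₂ b := by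
    rw [hxi, lt_div_iff₀ (by positivity)]
    linarith
  have hx₁ : xi SNR₂₁ SNR₂₂ b ≤ 1 := by
    rw [hxi, div_le_one (by positivity)]
    linarith
  have hx : 0 ≤ xi SNR₂₁ SNR₂₂ b := le_trans (by positivity) hx₀.le
  have hg : ∀ {β₁ β₂ : ℝ}, β₁ ≤ 1 → β₂ ≤ 1 →
      (b ≤ g₀ SNR₂₁ SNR₂₂ β₁ β₂ ↔ xi SNR₂₁ SNR₂₂ b ^ 2 ≤ (1 - β₁) * (1 - β₂)) :=
    fun h₁ h₂ => le_g₀_iff_s10 hS₂₁ hS₂₂ hb h₁ h₂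
  generalize xi SNR₂₁ SNR₂₂ b = x at *
  have hmem : 1 - x ^ 2 ∈ Set.Icc (0 : ℝ) 1 :=
    ⟨sub_nonneg.2 (pow_le_one₀ hx hx₁), sub_le_self _ (sq_nonneg x)⟩
  have hzero : (0 : ℝ) ∈ Set.Icc (0 : ℝ) 1 := ⟨le_rfl, zero_le_one⟩
  have hleft : SNR₁₂ ≤ SNR₁₁ → g₀ SNR₂₁ SNR₂₂ (1 - x ^ 2) 0 ≥ b ∧
      f₀ SNR₁₁ SNR₁₂ (1 - x ^ 2) 0
        = (1/2) * logb 2 (1 + (1 - x ^ 2) * max SNR₁₁ SNR₁₂) := fun h =>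
    ⟨(hg hmem.2 zero_le_one).2 (by simp), by rw [f₀_zero_right, max_eq_left h]⟩
  have hright : SNR₁₁ ≤ SNR₁₂ → g₀ SNR₂₁ SNR₂₂ 0 (1 - x ^ 2) ≥ b ∧
      f₀ SNR₁₁ SNR₁₂ 0 (1 - x ^ 2)
        = (1/2) * logb 2 (1 + (1 - x ^ 2) * max SNR₁₁ SNR₁₂) := fun h =>
    ⟨(hg zero_le_one hmem.2).2 (by simp), by rw [f₀_comm, f₀_zero_right, max_eq_right h]⟩
  refine ⟨⟨?_, ?_⟩, hleft, hright⟩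
  · rcases le_total SNR₁₂ SNR₁₁ with h | h
    · exact ⟨_, hmem, 0, hzero, (hleft h).1, (hleft h).2.symm⟩
    · exact ⟨0, hzero, _, hmem, (hright h).1, (hright h).2.symm⟩
  · rintro _ ⟨β₁, h₁, β₂, h₂, hβ, rfl⟩
    have hβ := (hg h₁.2 h₂.2).1 hβ
    rcases le_total SNR₁₂ SNR₁₁ with h | h
    · rw [max_eq_left h]
      exact f₀_le hS₁₁.le hS₁₂.le (le_sq_mul_of_min_sqrt_lt hS₁₂ h hx₀) h₁ h₂ hβ
    · rw [max_eq_right h, f₀_comm]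
      rw [min_comm] at hx₀
      rw [mul_comm] at hβ
      exact f₀_le hS₁₂.le hS₁₁.le (le_sq_mul_of_min_sqrt_lt hS₁₁ h hx₀) h₂ h₁ hβ
end

section
/- Necessary conditions for the no-feedback sum-rate maximizer (Lemma in Appendix G): (i) if 1 + SNR₂₁ + SNR₂₂ < b ≤ 1 + SNR₂₁ + SNR₂₂ + 2·√(SNR₂₁·SNR₂₂) and (β₁*,β₂*) ∈ [0,1]² satisfies g₀(β₁*,β₂*) ≥ b and f₀(β₁*,β₂*) ≥ f₀(β₁,β₂) for all (β₁,β₂) ∈ [0,1]² with g₀(β₁,β₂) ≥ b, then g₀(β₁*,β₂*) = b; (ii) if 0 ≤ b ≤ 1 + SNR₂₁ + SNR₂₂, then (1,1) is feasible and any such maximizer satisfies β₁* = β₂* = 1. -/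
open Real

/-- On nonnegative power splits the joint-rate bound is the active one. -/
lemma f₀_eq_of_nonneg {S₁ S₂ x y : ℝ} (hS₁ : 0 < S₁) (hS₂ : 0 < S₂) (hx : 0 ≤ x) (hy : 0 ≤ y) :
    f₀ S₁ S₂ x y = (1/2) * logb 2 (1 + x * S₁ + y * S₂) := by
  have hx' : 0 ≤ x * S₁ := by positivity
  have hy' : 0 ≤ y * S₂ := by positivity
  refine min_eq_left ?_
  rw [← mul_add, ← logb_mul (by positivity) (by positivity)]
  gcongr
  · norm_num
  · nlinarith [mul_nonneg hx' hy']

/-- On nonnegative power splits, a larger objective means a larger received power. -/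
lemma f₀_le_f₀_iff {S₁ S₂ x y x' y' : ℝ} (hS₁ : 0 < S₁) (hS₂ : 0 < S₂)
    (hx : 0 ≤ x) (hy : 0 ≤ y) (hx' : 0 ≤ x') (hy' : 0 ≤ y') :
    f₀ S₁ S₂ x' y' ≤ f₀ S₁ S₂ x y ↔ x' * S₁ + y' * S₂ ≤ x * S₁ + y * S₂ := by
  rw [f₀_eq_of_nonneg hS₁ hS₂ hx hy, f₀_eq_of_nonneg hS₁ hS₂ hx' hy',
    mul_le_mul_iff_right₀ (by norm_num), logb_le_logb one_lt_two (by positivity) (by positivity)]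
  constructor <;> intro h <;> linarith

/-- With the first transmitter sending information only, no coherent energy is harvested. -/
lemma g₀_one_left (S₁ S₂ y : ℝ) : g₀ S₁ S₂ 1 y = 1 + S₁ + S₂ := by
  simp [g₀]

lemma continuous_g₀_left (S₁ S₂ y : ℝ) : Continuous fun x => g₀ S₁ S₂ x y := by
  unfold g₀
  fun_prop

/-- Lemma of Appendix G: (i) when 1+SNR₂₁+SNR₂₂ < b ≤ 1+SNR₂₁+SNR₂₂+2√(SNR₂₁SNR₂₂),
any maximizer of the no-feedback sum-rate problem saturates the energy
constraint; (ii) when 0 ≤ b ≤ 1+SNR₂₁+SNR₂₂, the pair (1,1) is feasible and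
any maximizer is (1,1). -/
theorem no_feedback_maximizer_necessary_conditions (SNR₁₁ SNR₁₂ SNR₂₁ SNR₂₂ : ℝ)
    (hS₁₁ : 0 < SNR₁₁) (hS₁₂ : 0 < SNR₁₂) (hS₂₁ : 0 < SNR₂₁) (hS₂₂ : 0 < SNR₂₂) :
    (∀ b : ℝ, 1 + SNR₂₁ + SNR₂₂ < b →
      b ≤ 1 + SNR₂₁ + SNR₂₂ + 2 * Real.sqrt (SNR₂₁ * SNR₂₂) →
      ∀ β₁ ∈ Set.Icc (0:ℝ) 1, ∀ β₂ ∈ Set.Icc (0:ℝ) 1,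
        g₀ SNR₂₁ SNR₂₂ β₁ β₂ ≥ b →
        (∀ β₁' ∈ Set.Icc (0:ℝ) 1, ∀ β₂' ∈ Set.Icc (0:ℝ) 1,
          g₀ SNR₂₁ SNR₂₂ β₁' β₂' ≥ b →
          f₀ SNR₁₁ SNR₁₂ β₁' β₂' ≤ f₀ SNR₁₁ SNR₁₂ β₁ β₂) →
        g₀ SNR₂₁ SNR₂₂ β₁ β₂ = b) ∧
    (∀ b : ℝ, 0 ≤ b → b ≤ 1 + SNR₂₁ + SNR₂₂ →
      g₀ SNR₂₁ SNR₂₂ 1 1 ≥ b ∧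
      ∀ β₁ ∈ Set.Icc (0:ℝ) 1, ∀ β₂ ∈ Set.Icc (0:ℝ) 1,
        g₀ SNR₂₁ SNR₂₂ β₁ β₂ ≥ b →
        (∀ β₁' ∈ Set.Icc (0:ℝ) 1, ∀ β₂' ∈ Set.Icc (0:ℝ) 1,
          g₀ SNR₂₁ SNR₂₂ β₁' β₂' ≥ b →
          f₀ SNR₁₁ SNR₁₂ β₁' β₂' ≤ f₀ SNR₁₁ SNR₁₂ β₁ β₂) →
        β₁ = 1 ∧ β₂ = 1) := by
  constructor
  · intro b hb _ x hx y hy hg hmax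
    by_contra hne
    obtain ⟨z, hz, hgz⟩ := intermediate_value_Icc' hx.2
      (continuous_g₀_left SNR₂₁ SNR₂₂ y).continuousOn
      (show b ∈ Set.Icc _ _ from ⟨(g₀_one_left SNR₂₁ SNR₂₂ y).trans_le hb.le, hg⟩)
    have hz₀ : 0 ≤ z := hx.1.trans hz.1
    have hle := (f₀_le_f₀_iff hS₁₁ hS₁₂ hx.1 hy.1 hz₀ hy.1).1
      (hmax z ⟨hz₀, hz.2⟩ y hy hgz.ge)
    have hzx : z ≤ x := le_of_mul_le_mul_right (by linarith) hS₁₁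
    exact hne (le_antisymm hzx hz.1 ▸ hgz)
  · intro b _ hb
    have hfeas : g₀ SNR₂₁ SNR₂₂ 1 1 ≥ b := by rwa [g₀_one_left]
    refine ⟨hfeas, fun x hx y hy _ hmax => ?_⟩
    have hle := (f₀_le_f₀_iff hS₁₁ hS₁₂ hx.1 hy.1 zero_le_one zero_le_one).1
      (hmax 1 (by simp) 1 (by simp) hfeas)
    constructor
    · exact le_antisymm hx.2 (by nlinarith [hx.2, hy.2])
    · exact le_antisymm hy.2 (by nlinarith [hx.2, hy.2])
end

section
/- Core identity of Theorem 3: for all strictly positive real numbers SNR₁₁ and SNR₁₂, the quantity γ := ((SNR₁₁ + SNR₁₂)/(2·SNR₁₁·SNR₁₂))·(√(1 + 4·SNR₁₁·SNR₁₂/(SNR₁₁ + SNR₁₂)) − 1) satisfies 0 < γ < 1 and (1 + γ·SNR₁₁)·(1 + γ·SNR₁₂) = 1 + SNR₁₁ + SNR₁₂, and γ is the unique nonnegative real number with this latter property. -/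
/-- Core identity of Theorem 3: the quantity
γ = ((SNR₁₁+SNR₁₂)/(2·SNR₁₁·SNR₁₂))·(√(1 + 4·SNR₁₁·SNR₁₂/(SNR₁₁+SNR₁₂)) − 1)
lies in (0,1), satisfies (1+γ·SNR₁₁)·(1+γ·SNR₁₂) = 1 + SNR₁₁ + SNR₁₂, and is
the unique nonnegative real with this property. -/
theorem gamma_identity (SNR₁₁ SNR₁₂ : ℝ) (hS₁ : 0 < SNR₁₁) (hS₂ : 0 < SNR₁₂) :
    0 < (SNR₁₁ + SNR₁₂) / (2 * SNR₁₁ * SNR₁₂) *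
        (Real.sqrt (1 + 4 * SNR₁₁ * SNR₁₂ / (SNR₁₁ + SNR₁₂)) - 1) ∧
    (SNR₁₁ + SNR₁₂) / (2 * SNR₁₁ * SNR₁₂) *
        (Real.sqrt (1 + 4 * SNR₁₁ * SNR₁₂ / (SNR₁₁ + SNR₁₂)) - 1) < 1 ∧
    (1 + (SNR₁₁ + SNR₁₂) / (2 * SNR₁₁ * SNR₁₂) *
          (Real.sqrt (1 + 4 * SNR₁₁ * SNR₁₂ / (SNR₁₁ + SNR₁₂)) - 1) * SNR₁₁) *
      (1 + (SNR₁₁ + SNR₁₂) / (2 * SNR₁₁ * SNR₁₂) *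
          (Real.sqrt (1 + 4 * SNR₁₁ * SNR₁₂ / (SNR₁₁ + SNR₁₂)) - 1) * SNR₁₂)
      = 1 + SNR₁₁ + SNR₁₂ ∧
    ∀ γ' : ℝ, 0 ≤ γ' →
      (1 + γ' * SNR₁₁) * (1 + γ' * SNR₁₂) = 1 + SNR₁₁ + SNR₁₂ →
      γ' = (SNR₁₁ + SNR₁₂) / (2 * SNR₁₁ * SNR₁₂) *
        (Real.sqrt (1 + 4 * SNR₁₁ * SNR₁₂ / (SNR₁₁ + SNR₁₂)) - 1) := by
  have hab : 0 < SNR₁₁ * SNR₁₂ := mul_pos hS₁ hS₂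
  have hsum : 0 < SNR₁₁ + SNR₁₂ := add_pos hS₁ hS₂
  have hfrac : 0 < 4 * SNR₁₁ * SNR₁₂ / (SNR₁₁ + SNR₁₂) := by positivity
  have hsq := Real.sq_sqrt (by linarith : 0 ≤ 1 + 4 * SNR₁₁ * SNR₁₂ / (SNR₁₁ + SNR₁₂))
  have hs : 1 < Real.sqrt (1 + 4 * SNR₁₁ * SNR₁₂ / (SNR₁₁ + SNR₁₂)) :=
    Real.lt_sqrt_of_sq_lt (by linarith)
  set s := Real.sqrt (1 + 4 * SNR₁₁ * SNR₁₂ / (SNR₁₁ + SNR₁₂))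
  have hs_mul : (SNR₁₁ + SNR₁₂) * s ^ 2 = SNR₁₁ + SNR₁₂ + 4 * SNR₁₁ * SNR₁₂ := by
    rw [hsq]
    field_simp
  have hpos : 0 < (SNR₁₁ + SNR₁₂) / (2 * SNR₁₁ * SNR₁₂) * (s - 1) :=
    mul_pos (by positivity) (sub_pos.mpr hs)
  have hg_mul : 2 * (SNR₁₁ * SNR₁₂) * ((SNR₁₁ + SNR₁₂) / (2 * SNR₁₁ * SNR₁₂) * (s - 1))
      = (SNR₁₁ + SNR₁₂) * (s - 1) := by
    field_simp
  set g := (SNR₁₁ + SNR₁₂) / (2 * SNR₁₁ * SNR₁₂) * (s - 1)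
  have hquad : SNR₁₁ * SNR₁₂ * g ^ 2 + (SNR₁₁ + SNR₁₂) * g = SNR₁₁ + SNR₁₂ := by
    apply mul_left_cancel₀ (mul_pos four_pos hab).ne'
    linear_combination (2 * (SNR₁₁ * SNR₁₂) * g + (SNR₁₁ + SNR₁₂) * (s + 1)) * hg_mul
      + (SNR₁₁ + SNR₁₂) * hs_mul
  refine ⟨hpos, ?_, by linear_combination hquad, fun x hx h => ?_⟩
  · have hg_sq : 0 < SNR₁₁ * SNR₁₂ * g ^ 2 := by positivity
    exact lt_of_mul_lt_mul_left (by linarith : (SNR₁₁ + SNR₁₂) * g < (SNR₁₁ + SNR₁₂) * 1) hsum.le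
  · have hfactor : 0 < SNR₁₁ * SNR₁₂ * (x + g) + (SNR₁₁ + SNR₁₂) := by positivity
    apply sub_eq_zero.mp
    apply (mul_eq_zero.mp _).resolve_right hfactor.ne'
    linear_combination h - hquad
end

section
/- Maximum energy rate with feedback at the no-feedback sum-capacity (Theorem 3): the unique real number B in the interval [1 + SNR₂₁ + SNR₂₂, 1 + SNR₂₁ + SNR₂₂ + 2·√(SNR₂₁·SNR₂₂)] satisfying (1 + (1 − ξ(B)²)·SNR₁₁)·(1 + (1 − ξ(B)²)·SNR₁₂) = 1 + SNR₁₁ + SNR₁₂ is B_FB = 1 + SNR₂₁ + SNR₂₂ + 2·√((1 − γ)·SNR₂₁·SNR₂₂). -/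
/-- The constant γ of Theorem 3. -/
noncomputable def gammaFB (SNR₁₁ SNR₁₂ : ℝ) : ℝ :=
  (SNR₁₁ + SNR₁₂) / (2 * SNR₁₁ * SNR₁₂) *
    (Real.sqrt (1 + 4 * SNR₁₁ * SNR₁₂ / (SNR₁₁ + SNR₁₂)) - 1)

/-- γ is a root of `a * b * x ^ 2 + (a + b) * x = a + b`. -/
lemma gammaFB_quadratic {a b : ℝ} (ha : 0 < a) (hb : 0 < b) :
    a * b * gammaFB a b ^ 2 + (a + b) * gammaFB a b = a + b := by
  have hr : Real.sqrt (1 + 4 * a * b / (a + b)) ^ 2 = 1 + 4 * a * b / (a + b) :=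
    Real.sq_sqrt (by positivity)
  unfold gammaFB
  generalize Real.sqrt (1 + 4 * a * b / (a + b)) = r at hr ⊢
  have hab : a + b ≠ 0 := by positivity
  have hr' : (r ^ 2 - 1) * (a + b) = 4 * a * b := by
    rw [hr]
    field_simp
    ring
  field_simp
  linear_combination hr'

lemma gammaFB_pos {a b : ℝ} (ha : 0 < a) (hb : 0 < b) : 0 < gammaFB a b := by
  have h : 1 < Real.sqrt (1 + 4 * a * b / (a + b)) := by
    rw [Real.lt_sqrt zero_le_one, one_pow, lt_add_iff_pos_right]
    positivity
  exact mul_pos (by positivity) (sub_pos.2 h)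

lemma gammaFB_lt_one {a b : ℝ} (ha : 0 < a) (hb : 0 < b) : gammaFB a b < 1 := by
  by_contra! h
  have := gammaFB_quadratic ha hb
  have hab : 0 < a * b := mul_pos ha hb
  nlinarith [mul_pos hab (pow_pos (gammaFB_pos ha hb) 2)]

/-- For `0 ≤ y`, the sum-rate equation characterizes γ. -/
lemma sumRate_eq_iff_eq_gammaFB {a b y : ℝ} (ha : 0 < a) (hb : 0 < b) (hy : 0 ≤ y) :
    (1 + y * a) * (1 + y * b) = 1 + a + b ↔ y = gammaFB a b := by
  have hq := gammaFB_quadratic ha hb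
  have hpos := gammaFB_pos ha hb
  constructor
  · intro h
    have hfac : (y - gammaFB a b) * (a * b * (y + gammaFB a b) + (a + b)) = 0 := by
      linear_combination h - hq
    have hne : a * b * (y + gammaFB a b) + (a + b) ≠ 0 := by positivity
    exact sub_eq_zero.1 ((mul_eq_zero.1 hfac).resolve_right hne)
  · rintro rfl
    linear_combination hq

lemma xi_add_mul_sqrt {c d t : ℝ} (hc : 0 < c) (hd : 0 < d) (ht : 0 ≤ t) :
    xi c d (1 + c + d + 2 * (t * Real.sqrt (c * d))) = t := by
  have hs : 0 < Real.sqrt (c * d) := Real.sqrt_pos.2 (mul_pos hc hd)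
  rw [xi, add_sub_cancel_left, max_eq_right (by positivity)]
  field_simp

/-- Theorem 3: the unique B ∈ [1+SNR₂₁+SNR₂₂, 1+SNR₂₁+SNR₂₂+2√(SNR₂₁·SNR₂₂)]
with (1+(1−ξ(B)²)·SNR₁₁)·(1+(1−ξ(B)²)·SNR₁₂) = 1+SNR₁₁+SNR₁₂ is
B_FB = 1 + SNR₂₁ + SNR₂₂ + 2·√((1−γ)·SNR₂₁·SNR₂₂). -/
theorem max_energy_rate_with_feedback (SNR₁₁ SNR₁₂ SNR₂₁ SNR₂₂ : ℝ)
    (hS₁₁ : 0 < SNR₁₁) (hS₁₂ : 0 < SNR₁₂) (hS₂₁ : 0 < SNR₂₁) (hS₂₂ : 0 < SNR₂₂) :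
    (1 + SNR₂₁ + SNR₂₂ +
        2 * Real.sqrt ((1 - gammaFB SNR₁₁ SNR₁₂) * SNR₂₁ * SNR₂₂)) ∈
      Set.Icc (1 + SNR₂₁ + SNR₂₂)
        (1 + SNR₂₁ + SNR₂₂ + 2 * Real.sqrt (SNR₂₁ * SNR₂₂)) ∧
    (1 + (1 - xi SNR₂₁ SNR₂₂ (1 + SNR₂₁ + SNR₂₂ +
          2 * Real.sqrt ((1 - gammaFB SNR₁₁ SNR₁₂) * SNR₂₁ * SNR₂₂)) ^ 2) * SNR₁₁) *
      (1 + (1 - xi SNR₂₁ SNR₂₂ (1 + SNR₂₁ + SNR₂₂ +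
          2 * Real.sqrt ((1 - gammaFB SNR₁₁ SNR₁₂) * SNR₂₁ * SNR₂₂)) ^ 2) * SNR₁₂)
      = 1 + SNR₁₁ + SNR₁₂ ∧
    ∀ B ∈ Set.Icc (1 + SNR₂₁ + SNR₂₂)
        (1 + SNR₂₁ + SNR₂₂ + 2 * Real.sqrt (SNR₂₁ * SNR₂₂)),
      (1 + (1 - xi SNR₂₁ SNR₂₂ B ^ 2) * SNR₁₁) *
          (1 + (1 - xi SNR₂₁ SNR₂₂ B ^ 2) * SNR₁₂) = 1 + SNR₁₁ + SNR₁₂ →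
      B = 1 + SNR₂₁ + SNR₂₂ +
        2 * Real.sqrt ((1 - gammaFB SNR₁₁ SNR₁₂) * SNR₂₁ * SNR₂₂) := by
  have hγ₀ := gammaFB_pos hS₁₁ hS₁₂
  have hγ₁ : 0 ≤ 1 - gammaFB SNR₁₁ SNR₁₂ := (sub_pos.2 (gammaFB_lt_one hS₁₁ hS₁₂)).le
  have hs : 0 < Real.sqrt (SNR₂₁ * SNR₂₂) := Real.sqrt_pos.2 (mul_pos hS₂₁ hS₂₂)
  rw [mul_assoc (1 - gammaFB SNR₁₁ SNR₁₂), Real.sqrt_mul hγ₁,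
    xi_add_mul_sqrt hS₂₁ hS₂₂ (Real.sqrt_nonneg _), Real.sq_sqrt hγ₁, sub_sub_cancel]
  refine ⟨⟨le_add_of_nonneg_right (by positivity), ?_⟩,
    (sumRate_eq_iff_eq_gammaFB hS₁₁ hS₁₂ hγ₀.le).2 rfl, ?_⟩
  · gcongr
    exact mul_le_of_le_one_left hs.le (Real.sqrt_le_one.2 (by linarith))
  · rintro B ⟨hB₀, hB₁⟩ h
    obtain ⟨t, rfl⟩ : ∃ t, B = 1 + SNR₂₁ + SNR₂₂ + 2 * (t * Real.sqrt (SNR₂₁ * SNR₂₂)) :=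
      ⟨(B - (1 + SNR₂₁ + SNR₂₂)) / (2 * Real.sqrt (SNR₂₁ * SNR₂₂)), by field_simp; ring⟩
    have ht₀ : 0 ≤ t := nonneg_of_mul_nonneg_left (by linarith) hs
    have ht₁ : t ≤ 1 := le_of_mul_le_mul_right (by linarith) hs
    rw [xi_add_mul_sqrt hS₂₁ hS₂₂ ht₀,
      sumRate_eq_iff_eq_gammaFB hS₁₁ hS₁₂ (by nlinarith)] at h
    rw [← h, sub_sub_cancel, Real.sqrt_sq ht₀]
end

section
/- No feedback gain at very low SNR (Corollary 1): for fixed real parameters ν > 0, η > 0, ψ > 0, define γ̃(S) := ((1 + ν)/(2·ν·S))·(√(1 + 4·ν·S/(1 + ν)) − 1) and r(S) := 1 + (2·ψ·S·√(η·(1 − γ̃(S)))) / (1 + (1 + η)·ψ·S) for S > 0. Then r(S) → 1 as S → 0⁺. -/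
open Filter Topology

/-- Corollary 1: no feedback energy gain at very low SNR. With
γ̃(S) = ((1+ν)/(2νS))·(√(1 + 4νS/(1+ν)) − 1) and
r(S) = 1 + (2ψS·√(η·(1−γ̃(S)))) / (1 + (1+η)·ψ·S), one has r(S) → 1 as S → 0⁺. -/
theorem no_feedback_gain_low_snr (ν η ψ : ℝ) (hν : 0 < ν) (hη : 0 < η) (hψ : 0 < ψ) :
    Tendsto (fun S : ℝ =>
        1 + (2 * ψ * S * Real.sqrt (η * (1 - (1 + ν) / (2 * ν * S) *
            (Real.sqrt (1 + 4 * ν * S / (1 + ν)) - 1)))) /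
          (1 + (1 + η) * ψ * S))
      (nhdsWithin 0 (Set.Ioi 0)) (nhds 1) := by
  have upper : Tendsto (fun S : ℝ => 1 + 2 * ψ * S * Real.sqrt η) (𝓝[>] 0) (𝓝 1) := by
    have hcont : Continuous fun S : ℝ => 1 + 2 * ψ * S * Real.sqrt η := by fun_prop
    simpa using (hcont.tendsto 0).mono_left nhdsWithin_le_nhds
  refine tendsto_of_tendsto_of_tendsto_of_le_of_le' tendsto_const_nhds upper ?_ ?_
  · filter_upwards [self_mem_nhdsWithin] with S (hS : 0 < S)
    exact le_add_of_nonneg_right (by positivity)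
  · filter_upwards [self_mem_nhdsWithin] with S (hS : 0 < S)
    have hroot : 1 ≤ Real.sqrt (1 + 4 * ν * S / (1 + ν)) :=
      Real.one_le_sqrt.mpr (le_add_of_nonneg_right (by positivity))
    have hγ : 0 ≤ (1 + ν) / (2 * ν * S) * (Real.sqrt (1 + 4 * ν * S / (1 + ν)) - 1) :=
      mul_nonneg (by positivity) (sub_nonneg.mpr hroot)
    have hden : 1 ≤ 1 + (1 + η) * ψ * S := le_add_of_nonneg_right (by positivity)
    gcongr 1 + ?_
    refine (div_le_self (by positivity) hden).trans ?_
    gcongr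
    exact mul_le_of_le_one_right hη.le (sub_le_self 1 hγ)
end
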